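/- arXiv:1104.4534 — 3 statements merged into one kernel-verified Lean document; each statement's English description precedes it below -/
import Mathlib

section
/- Assume the Hamiltonians are independent of x, H_i(x,p) = H_i(p) for i = 1,2, with each H_i continuous, coercive, uniformly convex ((A6)) and satisfying H_i(0) = 0 ((A7)). Then (i) the ergodic constant of (E) equals 0; and (ii) the only Lipschitz continuous viscosity subsolutions of (E) with c = 0 are the constant pairs (a, a), a ∈ ℝ: if (v₁, v₂) is a pair of Lipschitz functions on 𝕋^n that is a viscosity subsolution of (E) with c = 0, then there is a ∈ ℝ with v₁ = v₂ ≡ a. -/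
open MeasureTheory Filter Topology Set

noncomputable section

/-- Euclidean space `ℝ^n`; the torus `𝕋^n` is modelled by `ℤ^n`-periodic functions on it. -/
abbrev En (n : ℕ) : Type := EuclideanSpace ℝ (Fin n)

/-- The integer vector `k ∈ ℤ^n` viewed as an element of `ℝ^n`. -/
def intVec (n : ℕ) (k : Fin n → ℤ) : En n := WithLp.toLp 2 (fun i => (k i : ℝ))

/-- A `ℤ^n`-periodic function on `ℝ^n`, i.e. a function on the torus `𝕋^n`. -/
def ZPeriodic {n : ℕ} (f : En n → ℝ) : Prop :=
  ∀ (x : En n) (k : Fin n → ℤ), f (x + intVec n k) = f x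

/-- A Hamiltonian `H : 𝕋^n × ℝ^n → ℝ` (periodic in the first variable). -/
def ZPeriodicH {n : ℕ} (H : En n → En n → ℝ) : Prop :=
  ∀ (x : En n) (k : Fin n → ℤ) (p : En n), H (x + intVec n k) p = H x p

/-- A function on `𝕋^n × ℝ` (space-time, periodic in space). -/
def ZPeriodicST {n : ℕ} (u : En n × ℝ → ℝ) : Prop :=
  ∀ (x : En n) (k : Fin n → ℤ) (t : ℝ), u (x + intVec n k, t) = u (x, t)

/-- (A1): coercivity, `lim_{r→∞} inf{H(x,p) : x ∈ 𝕋^n, |p| ≥ r} = ∞`. -/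
def Coercive {n : ℕ} (H : En n → En n → ℝ) : Prop :=
  ∀ M : ℝ, ∃ r : ℝ, ∀ (x p : En n), r ≤ ‖p‖ → M ≤ H x p

/-- Coercivity for an `x`-independent Hamiltonian. -/
def CoerciveP {n : ℕ} (H : En n → ℝ) : Prop :=
  ∀ M : ℝ, ∃ r : ℝ, ∀ p : En n, r ≤ ‖p‖ → M ≤ H p

/-- Lipschitz continuity (membership in `W^{1,∞}`). -/
def IsLip {n : ℕ} (f : En n → ℝ) : Prop := ∃ K : NNReal, LipschitzWith K f

/-- Viscosity subsolution inequality for one stationary equation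
`H(x, Dw) + c (w - wo) ≤ ρ(x)` of a weakly coupled system. -/
def StatSubIneq {n : ℕ} (H : En n → En n → ℝ) (c : ℝ) (w wo : En n → ℝ) (ρ : En n → ℝ) : Prop :=
  ∀ φ : En n → ℝ, ContDiff ℝ 1 φ →
    ∀ x₀ : En n, IsLocalMax (fun x => w x - φ x) x₀ →
      H x₀ (gradient φ x₀) + c * (w x₀ - wo x₀) ≤ ρ x₀

/-- Viscosity supersolution inequality for one stationary equation. -/
def StatSuperIneq {n : ℕ} (H : En n → En n → ℝ) (c : ℝ) (w wo : En n → ℝ) (ρ : En n → ℝ) : Prop :=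
  ∀ φ : En n → ℝ, ContDiff ℝ 1 φ →
    ∀ x₀ : En n, IsLocalMin (fun x => w x - φ x) x₀ →
      ρ x₀ ≤ H x₀ (gradient φ x₀) + c * (w x₀ - wo x₀)

/-- Viscosity subsolution of the stationary system
`Hᵢ(x, Dwᵢ) + cᵢ (wᵢ - wⱼ) = ρᵢ(x)`, `i = 1,2`. -/
def CellSub {n : ℕ} (H₁ H₂ : En n → En n → ℝ) (c₁ c₂ : ℝ) (w₁ w₂ : En n → ℝ)
    (ρ₁ ρ₂ : En n → ℝ) : Prop :=
  StatSubIneq H₁ c₁ w₁ w₂ ρ₁ ∧ StatSubIneq H₂ c₂ w₂ w₁ ρ₂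

/-- Viscosity supersolution of the stationary system. -/
def CellSuper {n : ℕ} (H₁ H₂ : En n → En n → ℝ) (c₁ c₂ : ℝ) (w₁ w₂ : En n → ℝ)
    (ρ₁ ρ₂ : En n → ℝ) : Prop :=
  StatSuperIneq H₁ c₁ w₁ w₂ ρ₁ ∧ StatSuperIneq H₂ c₂ w₂ w₁ ρ₂

/-- Viscosity solution (continuous, sub- and supersolution) of the stationary system. -/
def CellSolution {n : ℕ} (H₁ H₂ : En n → En n → ℝ) (c₁ c₂ : ℝ) (v₁ v₂ : En n → ℝ)
    (ρ₁ ρ₂ : En n → ℝ) : Prop :=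
  Continuous v₁ ∧ Continuous v₂ ∧
    CellSub H₁ H₂ c₁ c₂ v₁ v₂ ρ₁ ρ₂ ∧ CellSuper H₁ H₂ c₁ c₂ v₁ v₂ ρ₁ ρ₂

/-- Subsolution of the ergodic problem (E) with constant `c` (coupling constants 1). -/
def ErgSub {n : ℕ} (H₁ H₂ : En n → En n → ℝ) (v₁ v₂ : En n → ℝ) (c : ℝ) : Prop :=
  CellSub H₁ H₂ 1 1 v₁ v₂ (fun _ => c) (fun _ => c)

/-- Supersolution of the ergodic problem (E). -/
def ErgSuper {n : ℕ} (H₁ H₂ : En n → En n → ℝ) (v₁ v₂ : En n → ℝ) (c : ℝ) : Prop :=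
  CellSuper H₁ H₂ 1 1 v₁ v₂ (fun _ => c) (fun _ => c)

/-- Viscosity solution of the ergodic problem (E):
`H₁(x,Dv₁) + v₁ - v₂ = c`, `H₂(x,Dv₂) + v₂ - v₁ = c` on `𝕋^n`. -/
def ErgSolution {n : ℕ} (H₁ H₂ : En n → En n → ℝ) (v₁ v₂ : En n → ℝ) (c : ℝ) : Prop :=
  CellSolution H₁ H₂ 1 1 v₁ v₂ (fun _ => c) (fun _ => c)

/-- Viscosity subsolution inequality for one evolution equation
`∂ₜ u + H(x, Du) + u - uo ≤ 0` in `𝕋^n × (0,∞)`. -/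
def EvolSubIneq {n : ℕ} (H : En n → En n → ℝ) (u uo : En n × ℝ → ℝ) : Prop :=
  ∀ φ : En n × ℝ → ℝ, ContDiff ℝ 1 φ →
    ∀ (x₀ : En n) (t₀ : ℝ), 0 < t₀ →
      IsLocalMax (fun q => u q - φ q) (x₀, t₀) →
      fderiv ℝ φ (x₀, t₀) (0, 1) + H x₀ (gradient (fun y => φ (y, t₀)) x₀)
        + u (x₀, t₀) - uo (x₀, t₀) ≤ 0

/-- Viscosity supersolution inequality for one evolution equation. -/
def EvolSuperIneq {n : ℕ} (H : En n → En n → ℝ) (u uo : En n × ℝ → ℝ) : Prop :=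
  ∀ φ : En n × ℝ → ℝ, ContDiff ℝ 1 φ →
    ∀ (x₀ : En n) (t₀ : ℝ), 0 < t₀ →
      IsLocalMin (fun q => u q - φ q) (x₀, t₀) →
      0 ≤ fderiv ℝ φ (x₀, t₀) (0, 1) + H x₀ (gradient (fun y => φ (y, t₀)) x₀)
        + u (x₀, t₀) - uo (x₀, t₀)

/-- Viscosity subsolution of system (C) (with coupling constants `c₁ = c₂ = 1`). -/
def SysSub {n : ℕ} (H₁ H₂ : En n → En n → ℝ) (u₁ u₂ : En n × ℝ → ℝ) : Prop :=
  EvolSubIneq H₁ u₁ u₂ ∧ EvolSubIneq H₂ u₂ u₁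

/-- Viscosity supersolution of system (C). -/
def SysSuper {n : ℕ} (H₁ H₂ : En n → En n → ℝ) (u₁ u₂ : En n × ℝ → ℝ) : Prop :=
  EvolSuperIneq H₁ u₁ u₂ ∧ EvolSuperIneq H₂ u₂ u₁

/-- Viscosity solution of the Cauchy problem (C): continuous on `𝕋^n × [0,∞)`,
sub- and supersolution, attaining the initial data. -/
def SysSolution {n : ℕ} (H₁ H₂ : En n → En n → ℝ) (u₀₁ u₀₂ : En n → ℝ)
    (u₁ u₂ : En n × ℝ → ℝ) : Prop :=
  ContinuousOn u₁ {q : En n × ℝ | 0 ≤ q.2} ∧ ContinuousOn u₂ {q : En n × ℝ | 0 ≤ q.2} ∧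
    SysSub H₁ H₂ u₁ u₂ ∧ SysSuper H₁ H₂ u₁ u₂ ∧
    (∀ x, u₁ (x, 0) = u₀₁ x) ∧ (∀ x, u₂ (x, 0) = u₀₂ x)

/-- Viscosity subsolution of the single stationary equation `H(x,Dv) ≤ c` on `𝕋^n`. -/
def SingleSub {n : ℕ} (H : En n → En n → ℝ) (v : En n → ℝ) (c : ℝ) : Prop :=
  ∀ φ : En n → ℝ, ContDiff ℝ 1 φ →
    ∀ x₀ : En n, IsLocalMax (fun x => v x - φ x) x₀ → H x₀ (gradient φ x₀) ≤ c

/-- Viscosity supersolution of the single stationary equation `H(x,Dv) ≥ c` on `𝕋^n`. -/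
def SingleSuper {n : ℕ} (H : En n → En n → ℝ) (v : En n → ℝ) (c : ℝ) : Prop :=
  ∀ φ : En n → ℝ, ContDiff ℝ 1 φ →
    ∀ x₀ : En n, IsLocalMin (fun x => v x - φ x) x₀ → c ≤ H x₀ (gradient φ x₀)

/-- Viscosity solution of the single stationary equation `H(x,Dv) = c` on `𝕋^n`. -/
def SingleSolution {n : ℕ} (H : En n → En n → ℝ) (v : En n → ℝ) (c : ℝ) : Prop :=
  Continuous v ∧ SingleSub H v c ∧ SingleSuper H v c

/-- Uniform convergence `u(·,t) → v` on `𝕋^n` as `t → ∞`. -/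
def UnifTendsTo {n : ℕ} (u : En n × ℝ → ℝ) (v : En n → ℝ) : Prop :=
  ∀ ε : ℝ, 0 < ε → ∃ T : ℝ, ∀ t : ℝ, T ≤ t → ∀ x : En n, |u (x, t) - v x| ≤ ε

/-- (A8)⁺ at level `η` with constant `ψ`. -/
def A8plusAt {n : ℕ} (H : En n → En n → ℝ) (η ψ : ℝ) : Prop :=
  ∀ (x p q : En n), η ≤ H x (p + q) → H x q ≤ 0 →
    ∀ μ : ℝ, 0 < μ → μ ≤ 1 → H x (p + q) + ψ * (1 - μ) ≤ μ * H x (μ⁻¹ • p + q)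

/-- (A8)⁻ at level `η` with constant `ψ`. -/
def A8minusAt {n : ℕ} (H : En n → En n → ℝ) (η ψ : ℝ) : Prop :=
  ∀ (x p q : En n), H x (p + q) ≤ -η → 0 ≤ H x q →
    ∀ μ : ℝ, 1 ≤ μ → μ * H x (μ⁻¹ • p + q) ≤ H x (p + q) - ψ * (μ - 1) / μ

/-- (A8)⁺ with threshold `η₀`. -/
def A8plus {n : ℕ} (H : En n → En n → ℝ) (η₀ : ℝ) : Prop :=
  ∀ η : ℝ, 0 < η → η ≤ η₀ → ∃ ψ : ℝ, 0 < ψ ∧ A8plusAt H η ψ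

/-- (A8)⁻ with threshold `η₀`. -/
def A8minus {n : ℕ} (H : En n → En n → ℝ) (η₀ : ℝ) : Prop :=
  ∀ η : ℝ, 0 < η → η ≤ η₀ → ∃ ψ : ℝ, 0 < ψ ∧ A8minusAt H η ψ

/-- The function `F` of the Key Lemma: `F(r) = C r` for `r ≥ 0`, `F(r) = r / C` for `r < 0`. -/
def Fc (C r : ℝ) : ℝ := if 0 ≤ r then C * r else r / C

/-- `α_η⁺(s)` (resp. `β_η⁺(s)` with `u = u₂`):
`min_{x ∈ 𝕋^n, t ≥ s} (u(x,t) - v(x) + η (t-s)) / (u(x,s) - v(x))`. -/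
def alphaPlus {n : ℕ} (u : En n × ℝ → ℝ) (v : En n → ℝ) (η s : ℝ) : ℝ :=
  sInf {r : ℝ | ∃ (x : En n) (t : ℝ), s ≤ t ∧
    r = (u (x, t) - v x + η * (t - s)) / (u (x, s) - v x)}

/-- `α_η⁻(s)` (resp. `β_η⁻(s)` with `u = u₂`):
`max_{x ∈ 𝕋^n, t ≥ s} (u(x,t) - v(x) - η (t-s)) / (u(x,s) - v(x))`. -/
def alphaMinus {n : ℕ} (u : En n × ℝ → ℝ) (v : En n → ℝ) (η s : ℝ) : ℝ :=
  sSup {r : ℝ | ∃ (x : En n) (t : ℝ), s ≤ t ∧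
    r = (u (x, t) - v x - η * (t - s)) / (u (x, s) - v x)}

/-- (A9)⁺. -/
def A9plus {n : ℕ} (H : En n → En n → ℝ) : Prop :=
  ∃ K : Set (En n), IsClosed K ∧ (∀ x ∈ K, ∀ k : Fin n → ℤ, x + intVec n k ∈ K) ∧
    (∀ x ∈ K, (∀ p : En n, 0 ≤ H x p) ∧ ∃ p : En n, H x p = 0) ∧
    (∀ ε : ℝ, 0 < ε → ∃ η₀ : ℝ, 0 < η₀ ∧ ∃ ψ : ℝ → ℝ, (∀ r : ℝ, 0 < r → 0 < ψ r) ∧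
      ∀ η : ℝ, 0 < η → η ≤ η₀ → ∀ (x p q : En n), ε ≤ Metric.infDist x K →
        η ≤ H x (p + q) → H x q ≤ 0 →
        ∀ μ : ℝ, 0 < μ → μ ≤ 1 → H x (p + q) + ψ η * (1 - μ) ≤ μ * H x (μ⁻¹ • p + q))

/-- (A9)⁻. -/
def A9minus {n : ℕ} (H : En n → En n → ℝ) : Prop :=
  ∃ K : Set (En n), IsClosed K ∧ (∀ x ∈ K, ∀ k : Fin n → ℤ, x + intVec n k ∈ K) ∧
    (∀ x ∈ K, (∀ p : En n, 0 ≤ H x p) ∧ ∃ p : En n, H x p = 0) ∧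
    (∀ ε : ℝ, 0 < ε → ∃ η₀ : ℝ, 0 < η₀ ∧ ∃ ψ : ℝ → ℝ, (∀ r : ℝ, 0 < r → 0 < ψ r) ∧
      ∀ η : ℝ, 0 < η → η ≤ η₀ → ∀ (x p q : En n), ε ≤ Metric.infDist x K →
        H x (p + q) ≤ -η → 0 ≤ H x q →
        ∀ μ : ℝ, 1 ≤ μ → μ * H x (μ⁻¹ • p + q) ≤ H x (p + q) - ψ η * (μ - 1) / μ)

/-- (A6): uniform convexity of an `x`-independent Hamiltonian. -/
def UnifConvex {n : ℕ} (H : En n → ℝ) : Prop :=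
  ∃ α : ℝ, 0 < α ∧ ∀ᵐ q : En n ∂volume, DifferentiableAt ℝ H q ∧
    ∀ p : En n, H q + fderiv ℝ H q (p - q) + α * ‖p - q‖ ^ 2 ≤ H p

end

/-
At almost every point both components of a Lipschitz subsolution are differentiable, and adding
the two inequalities there cancels the coupling: `H₁ (∇v₁) + H₂ (∇v₂) ≤ 0`. If `ξᵢ` is a strict
subgradient of `Hᵢ` at `0`, this gives `⟪ξ₁, ∇v₁⟫ + ⟪ξ₂, ∇v₂⟫ ≤ 0`, whose left side has integral
zero over a period cell; so equality holds almost everywhere, and strictness forces `∇vᵢ = 0`.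
Evaluating the inequalities at extrema of `v₁` and `v₂` gives `c = 0` and the equality of the two
constants. Under (A6) the supporting paraboloids at points of differentiability have locally
bounded slopes, hence converge to one at `0`.
-/

open Module Function
open scoped Pointwise

section Periodic

theorem periodic_of_mem_span_int {α β : Type*} [AddCommGroup α] {s : Set α} {f : α → β}
    (hf : ∀ g ∈ s, Periodic f g) {g : α} (hg : g ∈ Submodule.span ℤ s) : Periodic f g := by
  induction hg using Submodule.span_induction with
  | mem g hg => exact hf g hg
  | zero => exact fun x => by rw [add_zero]
  | add g h _ _ hfg hfh => exact hfg.add_period hfh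
  | smul k g _ hfg => exact hfg.zsmul k

variable {E ι : Type*} [NormedAddCommGroup E] [NormedSpace ℝ E] {b : Basis ι ℝ E}

theorem vadd_eq_of_periodic_basis {β : Type*} {f : E → β} (hf : ∀ i, Periodic f (b i))
    (g : Submodule.span ℤ (range b)) (x : E) : f (g +ᵥ x) = f x := by
  rw [Submodule.vadd_def, vadd_eq_add, add_comm]
  exact periodic_of_mem_span_int (forall_mem_range.2 hf) g.2 x

theorem periodic_lineDeriv {F : Type*} [NormedAddCommGroup F] [NormedSpace ℝ F] {f : E → F}
    {g : E} (hf : Periodic f g) (w : E) :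
    Periodic (fun x => lineDeriv ℝ f x w) g := fun x => by
  simp only [lineDeriv, add_right_comm x g, hf _]

variable [Finite ι] [FiniteDimensional ℝ E]

theorem isCompact_range_of_periodic_basis {β : Type*} [TopologicalSpace β] {f : E → β}
    (hcont : Continuous f) (hper : ∀ i, Periodic f (b i)) : IsCompact (range f) := by
  have hD : IsCompact (closure (ZSpan.fundamentalDomain b)) :=
    (ZSpan.fundamentalDomain_isBounded b).isCompact_closure
  have hrange : range f = f '' closure (ZSpan.fundamentalDomain b) := by
    refine (range_subset_iff.2 fun x => ?_).antisymm (image_subset_range _ _)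
    obtain ⟨g, hg, -⟩ := ZSpan.exist_unique_vadd_mem_fundamentalDomain b x
    exact ⟨g +ᵥ x, subset_closure hg, vadd_eq_of_periodic_basis hper g x⟩
  exact hrange ▸ hD.image hcont

variable [MeasurableSpace E] {μ : Measure E}

theorem integrableOn_fundamentalDomain {f : E → ℝ} (hf : LocallyIntegrable f μ) :
    IntegrableOn f (ZSpan.fundamentalDomain b) μ :=
  (hf.integrableOn_isCompact
    (ZSpan.fundamentalDomain_isBounded b).isCompact_closure).mono_set subset_closure

variable [BorelSpace E] [μ.IsAddHaarMeasure]

theorem setIntegral_fundamentalDomain_comp_add_right {f : E → ℝ} (hf : ∀ i, Periodic f (b i))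
    (w : E) : ∫ x in ZSpan.fundamentalDomain b, f (x + w) ∂μ =
      ∫ x in ZSpan.fundamentalDomain b, f x ∂μ := by
  have : Countable (Submodule.span ℤ (range b)).toAddSubgroup :=
    inferInstanceAs (Countable (Submodule.span ℤ (range b)))
  have hD := ZSpan.isAddFundamentalDomain' b μ
  calc ∫ x in ZSpan.fundamentalDomain b, f (x + w) ∂μ
      = ∫ x in w +ᵥ ZSpan.fundamentalDomain b, f x ∂μ := by
        simp only [add_comm _ w]
        exact ((measurePreserving_add_left μ w).setIntegral_image_emb
          (measurableEmbedding_addLeft w) f _).symm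
    _ = ∫ x in ZSpan.fundamentalDomain b, f x ∂μ :=
        (hD.vadd_of_comm w).setIntegral_eq hD (vadd_eq_of_periodic_basis hf)

theorem ae_eq_zero_of_setIntegral_fundamentalDomain_eq_zero {f : E → ℝ}
    (hper : ∀ i, Periodic f (b i)) (hnonneg : 0 ≤ᵐ[μ] f) (hint : LocallyIntegrable f μ)
    (hzero : ∫ x in ZSpan.fundamentalDomain b, f x ∂μ = 0) : f =ᵐ[μ] 0 := by
  have : Countable (Submodule.span ℤ (range b)).toAddSubgroup :=
    inferInstanceAs (Countable (Submodule.span ℤ (range b)))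
  have hD : f =ᵐ[μ.restrict (ZSpan.fundamentalDomain b)] 0 :=
    (setIntegral_eq_zero_iff_of_nonneg_ae (ae_restrict_of_ae hnonneg)
      (integrableOn_fundamentalDomain hint)).1 hzero
  refine (ZSpan.isAddFundamentalDomain' b μ).measure_zero_of_invariant {x | f x ≠ 0}
    (fun g => ?_) ?_
  · ext x
    rw [mem_vadd_set_iff_neg_vadd_mem]
    exact not_congr (vadd_eq_of_periodic_basis hper (-g) x ▸ Iff.rfl)
  · rwa [← Measure.restrict_apply' (ZSpan.fundamentalDomain_measurableSet b)]

end Periodic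

section Lipschitz

variable {E ι : Type*} [NormedAddCommGroup E] [NormedSpace ℝ E] {v v₁ v₂ : E → ℝ}
  {K K₁ K₂ : NNReal}

theorem eq_of_ae_hasLineDerivAt_zero (hv : LipschitzWith K v) {x w : E}
    (h : ∀ᵐ t : ℝ, HasLineDerivAt ℝ v 0 (x + t • w) w) : v (x + w) = v x := by
  have hline : LipschitzWith _ fun t : ℝ => v (x + t • w) :=
    hv.comp ((LipschitzWith.const x).add (ContinuousLinearMap.toSpanSingleton ℝ w).lipschitz)
  have hderiv : ∀ᵐ t : ℝ, HasDerivAt (fun t : ℝ => v (x + t • w)) 0 t := by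
    filter_upwards [h] with t ht
    have hshift : HasDerivAt (fun s : ℝ => v (x + t • w + s • w)) 0 (t - t) := by
      rw [sub_self]
      exact ht
    simpa only [sub_smul, add_assoc, add_sub_cancel] using hshift.comp_sub_const t t
  obtain ⟨c, hc⟩ := (hline.lipschitzOnWith
    (s := uIcc 0 1)).absolutelyContinuousOnInterval.const_of_ae_hasDerivAt_zero
      (hderiv.mono fun t ht _ => ht)
  have hv₀ : v x = c := by simpa using hc 0 left_mem_uIcc
  have hv₁ : v (x + w) = c := by simpa using hc 1 right_mem_uIcc
  rw [hv₀, hv₁]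

variable [FiniteDimensional ℝ E] [MeasurableSpace E] [BorelSpace E] {μ : Measure E}
  [μ.IsAddHaarMeasure]

theorem ae_comp_add_eq_of_ae_lineDeriv_eq_zero (hv : LipschitzWith K v) {w : E}
    (h : ∀ᵐ x ∂μ, lineDeriv ℝ v x w = 0) : ∀ᵐ x ∂μ, v (x + w) = v x := by
  have hmeas : MeasurableSet {x | LineDifferentiableAt ℝ v x w ∧ lineDeriv ℝ v x w = 0} :=
    (measurableSet_lineDifferentiableAt hv.continuous).inter
      (measurable_lineDeriv hv.continuous (measurableSet_singleton 0))
  have hae : ∀ᵐ x ∂μ, x ∈ {x | LineDifferentiableAt ℝ v x w ∧ lineDeriv ℝ v x w = 0} :=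
    (hv.ae_lineDifferentiableAt w).and h
  filter_upwards [(ae_ae_add_linearMap_mem_iff (LinearMap.toSpanSingleton ℝ E w) volume μ
    hmeas).2 hae] with x hx
  refine eq_of_ae_hasLineDerivAt_zero hv (hx.mono fun t ⟨hdiff, hzero⟩ => ?_)
  exact hzero ▸ hdiff.hasLineDerivAt

theorem eq_of_ae_lineDeriv_eq_zero (hv : LipschitzWith K v)
    (h : ∀ᵐ x ∂μ, ∀ w, lineDeriv ℝ v x w = 0) (x y : E) : v x = v y := by
  have hcont := hv.continuous
  have htrans : (fun z => v (z + (x - y))) = v := Measure.eq_of_ae_eq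
    (ae_comp_add_eq_of_ae_lineDeriv_eq_zero (μ := μ) hv (h.mono fun _ hz => hz _))
    (by fun_prop) hcont
  simpa only [add_sub_cancel] using congrFun htrans y

theorem tendsto_setIntegral_inv_smul_sub_lineDeriv (hv : LipschitzWith K v) {s : Set E}
    (hs : MeasurableSet s) (hfin : μ s ≠ ⊤) (w : E) :
    Tendsto (fun t : ℝ => ∫ x in s, t⁻¹ • (v (x + t • w) - v x) ∂μ) (𝓝[>] 0)
      (𝓝 (∫ x in s, lineDeriv ℝ v x w ∂μ)) := by
  have hmul_indicator (f : E → ℝ) :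
      ∫ x, f x * s.indicator (fun _ => (1 : ℝ)) x ∂μ = ∫ x in s, f x ∂μ := by
    simp only [← integral_indicator hs, ← indicator_mul_right, mul_one]
  simpa only [hmul_indicator] using
    hv.integral_inv_smul_sub_mul_tendsto_integral_lineDeriv_mul
      ((integrable_indicator_iff hs).2 (integrableOn_const (C := (1 : ℝ)) hfin)) w

variable [Finite ι] {b : Basis ι ℝ E}

theorem setIntegral_fundamentalDomain_lineDeriv_eq_zero (hv : LipschitzWith K v)
    (hper : ∀ i, Periodic v (b i)) (w : E) :
    ∫ x in ZSpan.fundamentalDomain b, lineDeriv ℝ v x w ∂μ = 0 := by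
  refine tendsto_nhds_unique (tendsto_setIntegral_inv_smul_sub_lineDeriv hv
    (ZSpan.fundamentalDomain_measurableSet b)
    (ZSpan.fundamentalDomain_isBounded b).measure_lt_top.ne w) ?_
  refine tendsto_const_nhds.congr fun t => ?_
  have hcont := hv.continuous
  have htrans : Continuous fun x => v (x + t • w) := by fun_prop
  rw [integral_smul, integral_sub (integrableOn_fundamentalDomain htrans.locallyIntegrable)
    (integrableOn_fundamentalDomain hcont.locallyIntegrable),
    setIntegral_fundamentalDomain_comp_add_right hper, sub_self, smul_zero]

theorem ae_lineDeriv_add_lineDeriv_eq_zero (hv₁ : LipschitzWith K₁ v₁)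
    (hv₂ : LipschitzWith K₂ v₂) (hper₁ : ∀ i, Periodic v₁ (b i)) (hper₂ : ∀ i, Periodic v₂ (b i))
    {w₁ w₂ : E} (hle : ∀ᵐ x ∂μ, lineDeriv ℝ v₁ x w₁ + lineDeriv ℝ v₂ x w₂ ≤ 0) :
    ∀ᵐ x ∂μ, lineDeriv ℝ v₁ x w₁ + lineDeriv ℝ v₂ x w₂ = 0 := by
  have hint₁ := hv₁.locallyIntegrable_lineDeriv (μ := μ) w₁
  have hint₂ := hv₂.locallyIntegrable_lineDeriv (μ := μ) w₂
  have hneg := ae_eq_zero_of_setIntegral_fundamentalDomain_eq_zero (b := b) (μ := μ)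
    (f := fun x => -(lineDeriv ℝ v₁ x w₁ + lineDeriv ℝ v₂ x w₂))
    (fun i x => by
      simp only [periodic_lineDeriv (hper₁ i) w₁ x, periodic_lineDeriv (hper₂ i) w₂ x])
    (hle.mono fun x hx => neg_nonneg.2 hx) (hint₁.add hint₂).neg
    (by rw [integral_neg, integral_add (integrableOn_fundamentalDomain hint₁)
          (integrableOn_fundamentalDomain hint₂),
          setIntegral_fundamentalDomain_lineDeriv_eq_zero hv₁ hper₁,
          setIntegral_fundamentalDomain_lineDeriv_eq_zero hv₂ hper₂, add_zero, neg_zero])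
  exact hneg.mono fun x hx => neg_eq_zero.1 hx

end Lipschitz

section InnerProductSpace

variable {E : Type*} [NormedAddCommGroup E] [InnerProductSpace ℝ E] {f : E → ℝ} {α : ℝ}
  {ξ q : E}

/-- `ξ` is a strict subgradient of `f` at `q`: the affine function through `(q, f q)` with slope
`ξ` lies strictly below `f` away from `q`. -/
def HasStrictSubgradientAt (f : E → ℝ) (ξ q : E) : Prop :=
  ∀ p ≠ q, f q + inner ℝ ξ (p - q) < f p

/-- The paraboloid of opening `α` through `(q, f q)` with slope `ξ` lies below the graph of `f`:
`ξ` is a subgradient of `f` at `q` with a quadratic gain, and the set of such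
`q` is closed for continuous `f`, unlike for `HasStrictSubgradientAt`. -/
def HasQuadraticSupportAt (f : E → ℝ) (α : ℝ) (ξ q : E) : Prop :=
  ∀ p, f q + inner ℝ ξ (p - q) + α * ‖p - q‖ ^ 2 ≤ f p

theorem HasQuadraticSupportAt.norm_le (h : HasQuadraticSupportAt f α ξ q) {C : ℝ}
    (hC : ∀ p ∈ Metric.closedBall q 1, |f p| ≤ C) : ‖ξ‖ ≤ 2 * C + |α| := by
  have hq := abs_le.1 (hC q (Metric.mem_closedBall_self zero_le_one))
  rcases eq_or_ne ξ 0 with rfl | hξ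
  · rw [norm_zero]
    linarith [abs_nonneg α]
  have hunit : ‖‖ξ‖⁻¹ • ξ‖ = 1 := norm_smul_inv_norm (𝕜 := ℝ) hξ
  have hinner : inner ℝ ξ (‖ξ‖⁻¹ • ξ) = ‖ξ‖ := by
    rw [real_inner_smul_right, real_inner_self_eq_norm_mul_norm,
      inv_mul_cancel_left₀ (norm_ne_zero_iff.2 hξ)]
  have hsupport := h (q + ‖ξ‖⁻¹ • ξ)
  rw [add_sub_cancel_left, hinner, hunit] at hsupport
  have hp := abs_le.1 (hC (q + ‖ξ‖⁻¹ • ξ) (by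
    rw [mem_closedBall_iff_norm, add_sub_cancel_left, hunit]))
  linarith [neg_abs_le α]

theorem HasQuadraticSupportAt.hasStrictSubgradientAt (h : HasQuadraticSupportAt f α ξ q)
    (hα : 0 < α) : HasStrictSubgradientAt f ξ q := fun p hp => by
  have hgain : 0 < α * ‖p - q‖ ^ 2 := by
    have := norm_pos_iff.2 (sub_ne_zero.2 hp)
    positivity
  linarith [h p]

theorem HasStrictSubgradientAt.add_inner_le (h : HasStrictSubgradientAt f ξ q) (p : E) :
    f q + inner ℝ ξ (p - q) ≤ f p := by
  rcases eq_or_ne p q with rfl | hp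
  · rw [sub_self, inner_zero_right, add_zero]
  · exact (h p hp).le

theorem lineDeriv_eq_inner_gradient [CompleteSpace E] {x : E} (hd : DifferentiableAt ℝ f x)
    (w : E) : lineDeriv ℝ f x w = inner ℝ w (gradient f x) := by
  rw [hd.lineDeriv_eq_fderiv, ← inner_gradient_left, real_inner_comm]

theorem gradient_inner_add_const_mul_norm_sub_sq [CompleteSpace E] (p x y : E) (a : ℝ) :
    gradient (fun z => inner ℝ p z + a * ‖z - x‖ ^ 2) y = p + (2 * a) • (y - x) := by
  refine HasGradientAt.gradient (hasGradientAt_iff_hasFDerivAt.2 ?_)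
  have hlinear : HasFDerivAt (fun z : E => inner ℝ p z) (innerSL ℝ p) y :=
    (innerSL ℝ p).hasFDerivAt
  have hsq := ((hasFDerivAt_id (𝕜 := ℝ) y).sub_const x).norm_sq
  refine (hlinear.add (hsq.const_mul a)).congr_fderiv ?_
  ext z
  simp [mul_assoc, mul_left_comm]

theorem exists_forall_mem_closedBall_sub_le_of_hasGradientAt [CompleteSpace E]
    {v : E → ℝ} {p x : E} (hp : HasGradientAt v p x) {δ ε : ℝ} (hδ : 0 < δ) (hε : 0 < ε) :
    ∃ r > 0, r < ε ∧
      ∀ z ∈ Metric.closedBall x r, v z - v x - inner ℝ p (z - x) ≤ δ * ‖z - x‖ := by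
  obtain ⟨r₀, hr₀, hlinear⟩ :=
    Metric.eventually_nhds_iff.1 (hasGradientAt_iff_isLittleO.1 hp |>.def hδ)
  refine ⟨min (r₀ / 2) (ε / 2), by positivity, ?_, fun z hz => ?_⟩
  · exact (min_le_right _ _).trans_lt (half_lt_self hε)
  · refine (Real.le_norm_self _).trans (hlinear ?_)
    exact (Metric.mem_closedBall.1 hz).trans_lt ((min_le_left _ _).trans_lt (half_lt_self hr₀))

variable [ProperSpace E]

theorem isClosed_setOf_exists_hasQuadraticSupportAt (hf : Continuous f) (α : ℝ) :
    IsClosed {q | ∃ ξ, HasQuadraticSupportAt f α ξ q} := by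
  refine IsSeqClosed.isClosed fun q q₀ hq hlim => ?_
  choose ξ hξ using hq
  obtain ⟨C, hC⟩ := (isCompact_closedBall q₀ 2).exists_bound_of_continuousOn hf.continuousOn
  have hbdd : ∀ᶠ k in atTop, ξ k ∈ Metric.closedBall 0 (2 * C + |α|) := by
    filter_upwards [hlim (Metric.closedBall_mem_nhds q₀ one_pos)] with k hk
    rw [mem_closedBall_zero_iff]
    refine (hξ k).norm_le fun p hp => hC p ?_
    exact Metric.closedBall_subset_closedBall' (by linarith [Metric.mem_closedBall.1 hk]) hp
  obtain ⟨ξ₀, -, κ, hκ, hξ₀⟩ :=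
    tendsto_subseq_of_frequently_bounded Metric.isBounded_closedBall hbdd.frequently
  refine ⟨ξ₀, fun p => ?_⟩
  have hqκ : Tendsto (q ∘ κ) atTop (𝓝 q₀) := hlim.comp hκ.tendsto_atTop
  have hpq : Tendsto (fun k => p - q (κ k)) atTop (𝓝 (p - q₀)) := tendsto_const_nhds.sub hqκ
  exact le_of_tendsto' ((((hf.tendsto q₀).comp hqκ).add (hξ₀.inner hpq)).add
    ((hpq.norm.pow 2).const_mul α)) fun k => hξ (κ k) p

theorem exists_isLocalMax_sub_paraboloid {v : E → ℝ} {p x : E} (hp : HasGradientAt v p x)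
    (hv : Continuous v) {ε : ℝ} (hε : 0 < ε) :
    ∃ (a : ℝ) (y : E), dist y x < ε ∧ ‖(2 * a) • (y - x)‖ < ε ∧
      IsLocalMax (fun z => v z - (inner ℝ p z + a * ‖z - x‖ ^ 2)) y := by
  obtain ⟨δ, hδ, hδε⟩ : ∃ δ > 0, 2 * δ < ε := ⟨ε / 4, by positivity, by linarith⟩
  obtain ⟨r, hr, hrε, hlinear⟩ :=
    exists_forall_mem_closedBall_sub_le_of_hasGradientAt hp hδ hε
  have hxmem : x ∈ Metric.closedBall x r := Metric.mem_closedBall_self hr.le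
  -- The opening `2 * δ / r` beats the linearization error, so the maximum is interior.
  obtain ⟨y, hy, hmax⟩ := (isCompact_closedBall x r).exists_isMaxOn ⟨x, hxmem⟩
    (f := fun z => v z - (inner ℝ p z + 2 * δ / r * ‖z - x‖ ^ 2)) (by fun_prop)
  have hslope : 2 * δ / r * ‖y - x‖ ≤ δ := by
    rcases (norm_nonneg (y - x)).eq_or_lt with hyx | hyx
    · rw [← hyx, mul_zero]
      exact hδ.le
    have hle := isMaxOn_iff.1 hmax x hxmem
    have hlinear_y := hlinear y hy
    rw [sub_self, norm_zero] at hle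
    rw [inner_sub_right] at hlinear_y
    exact le_of_mul_le_mul_right (by linarith) hyx
  have hdist : dist y x < r := by
    rw [div_mul_eq_mul_div, div_le_iff₀ hr] at hslope
    rw [dist_eq_norm]
    nlinarith
  refine ⟨2 * δ / r, y, hdist.trans hrε, ?_,
    hmax.isLocalMax (Metric.closedBall_mem_nhds_of_mem hdist)⟩
  rw [norm_smul, Real.norm_of_nonneg (by positivity)]
  linarith

theorem exists_contDiff_isLocalMax_sub_gradient_near {v : E → ℝ} {x : E} (hv : Continuous v)
    (hd : DifferentiableAt ℝ v x) {ε : ℝ} (hε : 0 < ε) :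
    ∃ (φ : E → ℝ) (y : E), ContDiff ℝ 1 φ ∧ IsLocalMax (fun z => v z - φ z) y ∧
      dist y x < ε ∧ dist (gradient φ y) (gradient v x) < ε := by
  obtain ⟨a, y, hyx, hgrad, hmax⟩ :=
    exists_isLocalMax_sub_paraboloid hd.hasGradientAt hv hε
  refine ⟨_, y, ?_, hmax, hyx, ?_⟩
  · exact (contDiff_const.inner ℝ contDiff_id).add
      (contDiff_const.mul ((contDiff_id.sub contDiff_const).norm_sq ℝ))
  · rwa [gradient_inner_add_const_mul_norm_sub_sq, dist_self_add_left]

end InnerProductSpace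

section PeriodicGradient

variable {E ι : Type*} [NormedAddCommGroup E] [InnerProductSpace ℝ E] [FiniteDimensional ℝ E]
  [MeasurableSpace E] [BorelSpace E] {μ : Measure E} [μ.IsAddHaarMeasure] {v v₁ v₂ : E → ℝ}
  {K K₁ K₂ : NNReal}

theorem eq_of_ae_gradient_eq_zero (hv : LipschitzWith K v) (h : ∀ᵐ x ∂μ, gradient v x = 0)
    (x y : E) : v x = v y := by
  refine eq_of_ae_lineDeriv_eq_zero hv (μ := μ) ?_ x y
  filter_upwards [h, hv.ae_differentiableAt] with z hz hd w
  rw [lineDeriv_eq_inner_gradient hd, hz, inner_zero_right]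

theorem ae_gradient_eq_zero_of_add_le [Finite ι] {b : Basis ι ℝ E} {f₁ f₂ : E → ℝ} {ξ₁ ξ₂ : E}
    (hξ₁ : HasStrictSubgradientAt f₁ ξ₁ 0) (hξ₂ : HasStrictSubgradientAt f₂ ξ₂ 0)
    (hv₁ : LipschitzWith K₁ v₁) (hv₂ : LipschitzWith K₂ v₂)
    (hper₁ : ∀ i, Periodic v₁ (b i)) (hper₂ : ∀ i, Periodic v₂ (b i))
    (hle : ∀ᵐ x ∂μ, f₁ (gradient v₁ x) + f₂ (gradient v₂ x) ≤ f₁ 0 + f₂ 0) :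
    ∀ᵐ x ∂μ, gradient v₁ x = 0 ∧ gradient v₂ x = 0 := by
  have hsupp₁ (p : E) : f₁ 0 + inner ℝ ξ₁ p ≤ f₁ p := by
    simpa only [sub_zero] using hξ₁.add_inner_le p
  have hsupp₂ (p : E) : f₂ 0 + inner ℝ ξ₂ p ≤ f₂ p := by
    simpa only [sub_zero] using hξ₂.add_inner_le p
  have hdiff := (hv₁.ae_differentiableAt (μ := μ)).and (hv₂.ae_differentiableAt (μ := μ))
  have hline : ∀ᵐ x ∂μ, lineDeriv ℝ v₁ x ξ₁ + lineDeriv ℝ v₂ x ξ₂ = 0 := by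
    refine ae_lineDeriv_add_lineDeriv_eq_zero hv₁ hv₂ hper₁ hper₂ ?_
    filter_upwards [hle, hdiff] with x hx ⟨hd₁, hd₂⟩
    rw [lineDeriv_eq_inner_gradient hd₁, lineDeriv_eq_inner_gradient hd₂]
    linarith [hsupp₁ (gradient v₁ x), hsupp₂ (gradient v₂ x)]
  filter_upwards [hle, hline, hdiff] with x hx hzero ⟨hd₁, hd₂⟩
  rw [lineDeriv_eq_inner_gradient hd₁, lineDeriv_eq_inner_gradient hd₂] at hzero
  constructor <;> by_contra hne
  · have hstrict := hξ₁ _ hne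
    rw [sub_zero] at hstrict
    linarith [hsupp₂ (gradient v₂ x)]
  · have hstrict := hξ₂ _ hne
    rw [sub_zero] at hstrict
    linarith [hsupp₁ (gradient v₁ x)]

end PeriodicGradient

section Viscosity

variable {n : ℕ} {H H₁ H₂ : En n → En n → ℝ} {c : ℝ} {v v₁ v₂ w ρ ρ₁ ρ₂ : En n → ℝ} {x : En n}

theorem StatSubIneq.le_of_differentiableAt (h : StatSubIneq H c v w ρ)
    (hH : Continuous (uncurry H)) (hv : Continuous v) (hw : Continuous w) (hρ : Continuous ρ)
    (hd : DifferentiableAt ℝ v x) : H x (gradient v x) + c * (v x - w x) ≤ ρ x := by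
  have hclosed : IsClosed
      {z : En n × En n | uncurry H z + c * (v z.1 - w z.1) ≤ ρ z.1} :=
    isClosed_le (by fun_prop) (by fun_prop)
  refine hclosed.closure_subset
    (Metric.mem_closure_iff.2 fun ε hε => ?_ : (x, gradient v x) ∈ _)
  obtain ⟨φ, y, hφ, hmax, hyx, hgrad⟩ := exists_contDiff_isLocalMax_sub_gradient_near hv hd hε
  refine ⟨(y, gradient φ y), h φ hφ y hmax, ?_⟩
  rw [dist_comm, Prod.dist_eq]
  exact max_lt hyx hgrad

theorem StatSubIneq.le_of_isLocalMax (h : StatSubIneq H c v w ρ) (hx : IsLocalMax v x) :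
    H x 0 + c * (v x - w x) ≤ ρ x := by
  simpa using h (fun _ => 0) contDiff_const x (by simpa using hx)

theorem StatSuperIneq.le_of_isLocalMin (h : StatSuperIneq H c v w ρ) (hx : IsLocalMin v x) :
    ρ x ≤ H x 0 + c * (v x - w x) := by
  simpa using h (fun _ => 0) contDiff_const x (by simpa using hx)

theorem cellSolution_const (c₁ c₂ a : ℝ) (hH₁ : ∀ x, H₁ x 0 = ρ₁ x)
    (hH₂ : ∀ x, H₂ x 0 = ρ₂ x) :
    CellSolution H₁ H₂ c₁ c₂ (fun _ => a) (fun _ => a) ρ₁ ρ₂ := by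
  have hgrad {φ : En n → ℝ} {x : En n} (hx : fderiv ℝ (fun z => a - φ z) x = 0) :
      gradient φ x = 0 := by
    rw [fderiv_const_sub, neg_eq_zero] at hx
    rw [gradient, hx, map_zero]
  have hsub {H : En n → En n → ℝ} {ρ : En n → ℝ} (hH : ∀ x, H x 0 = ρ x) (c : ℝ) :
      StatSubIneq H c (fun _ => a) (fun _ => a) ρ := fun φ _ x hx => by
    rw [hgrad hx.fderiv_eq_zero, hH, sub_self, mul_zero, add_zero]
  have hsuper {H : En n → En n → ℝ} {ρ : En n → ℝ} (hH : ∀ x, H x 0 = ρ x) (c : ℝ) :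
      StatSuperIneq H c (fun _ => a) (fun _ => a) ρ := fun φ _ x hx => by
    rw [hgrad hx.fderiv_eq_zero, hH, sub_self, mul_zero, add_zero]
  exact ⟨continuous_const, continuous_const, ⟨hsub hH₁ c₁, hsub hH₂ c₂⟩,
    ⟨hsuper hH₁ c₁, hsuper hH₂ c₂⟩⟩

theorem ZPeriodic.periodic_basisFun (hv : ZPeriodic v) (i : Fin n) :
    Periodic v ((EuclideanSpace.basisFun (Fin n) ℝ).toBasis i) := fun x => by
  have hint : (EuclideanSpace.basisFun (Fin n) ℝ).toBasis i = intVec n (Pi.single i 1) := by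
    ext j
    by_cases hij : j = i <;> simp [intVec, Pi.single_apply, hij]
  rw [hint, hv]

theorem ZPeriodic.isCompact_range (hper : ZPeriodic v) (hv : Continuous v) :
    IsCompact (range v) :=
  isCompact_range_of_periodic_basis hv hper.periodic_basisFun

theorem ZPeriodic.exists_forall_le (hper : ZPeriodic v) (hv : Continuous v) :
    ∃ x, ∀ y, v y ≤ v x := by
  obtain ⟨-, ⟨x, rfl⟩, hx⟩ := (hper.isCompact_range hv).exists_isGreatest (range_nonempty v)
  exact ⟨x, fun y => hx (mem_range_self y)⟩

theorem ZPeriodic.exists_forall_ge (hper : ZPeriodic v) (hv : Continuous v) :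
    ∃ x, ∀ y, v x ≤ v y := by
  obtain ⟨-, ⟨x, rfl⟩, hx⟩ := (hper.isCompact_range hv).exists_isLeast (range_nonempty v)
  exact ⟨x, fun y => hx (mem_range_self y)⟩

theorem ErgSub.nonneg (h : ErgSub H₁ H₂ v₁ v₂ c) (hH₁ : ∀ x, 0 ≤ H₁ x 0)
    (hH₂ : ∀ x, 0 ≤ H₂ x 0) (hv₁ : Continuous v₁) (hv₂ : Continuous v₂) (hper₁ : ZPeriodic v₁)
    (hper₂ : ZPeriodic v₂) : 0 ≤ c := by
  obtain ⟨x, hx⟩ := hper₁.exists_forall_le hv₁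
  obtain ⟨y, hy⟩ := hper₂.exists_forall_le hv₂
  linarith [h.1.le_of_isLocalMax (Eventually.of_forall hx),
    h.2.le_of_isLocalMax (Eventually.of_forall hy), hH₁ x, hH₂ y, hx y, hy x]

theorem ErgSuper.nonpos (h : ErgSuper H₁ H₂ v₁ v₂ c) (hH₁ : ∀ x, H₁ x 0 ≤ 0)
    (hH₂ : ∀ x, H₂ x 0 ≤ 0) (hv₁ : Continuous v₁) (hv₂ : Continuous v₂) (hper₁ : ZPeriodic v₁)
    (hper₂ : ZPeriodic v₂) : c ≤ 0 := by
  obtain ⟨x, hx⟩ := hper₁.exists_forall_ge hv₁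
  obtain ⟨y, hy⟩ := hper₂.exists_forall_ge hv₂
  linarith [h.1.le_of_isLocalMin (Eventually.of_forall hx),
    h.2.le_of_isLocalMin (Eventually.of_forall hy), hH₁ x, hH₂ y, hx y, hy x]

end Viscosity

section ConvexHamiltonian

variable {n : ℕ} {Hp Hp₁ Hp₂ v₁ v₂ : En n → ℝ} {c : ℝ}

theorem UnifConvex.exists_hasStrictSubgradientAt (h : UnifConvex Hp) (hcont : Continuous Hp)
    (q : En n) : ∃ ξ, HasStrictSubgradientAt Hp ξ q := by
  obtain ⟨α, hα, hae⟩ := h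
  have hdense : Dense {q | ∃ ξ, HasQuadraticSupportAt Hp α ξ q} :=
    Measure.dense_of_ae (hae.mono fun q hq => ⟨gradient Hp q, fun p => by
      rw [inner_gradient_left]
      exact hq.2 p⟩)
  obtain ⟨ξ, hξ⟩ : q ∈ {q | ∃ ξ, HasQuadraticSupportAt Hp α ξ q} := by
    rw [← (isClosed_setOf_exists_hasQuadraticSupportAt hcont α).closure_eq]
    exact hdense q
  exact ⟨ξ, hξ.hasStrictSubgradientAt hα⟩

theorem ErgSub.add_le_of_differentiableAt
    (h : ErgSub (fun _ p => Hp₁ p) (fun _ p => Hp₂ p) v₁ v₂ c)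
    (hH₁ : Continuous Hp₁) (hH₂ : Continuous Hp₂) (hv₁ : Continuous v₁) (hv₂ : Continuous v₂)
    {x : En n} (hd₁ : DifferentiableAt ℝ v₁ x) (hd₂ : DifferentiableAt ℝ v₂ x) :
    Hp₁ (gradient v₁ x) + Hp₂ (gradient v₂ x) ≤ c + c := by
  linarith [h.1.le_of_differentiableAt (hH₁.comp continuous_snd) hv₁ hv₂ continuous_const hd₁,
    h.2.le_of_differentiableAt (hH₂.comp continuous_snd) hv₂ hv₁ continuous_const hd₂]

theorem ErgSub.exists_eq_const {K₁ K₂ : NNReal} {ξ₁ ξ₂ : En n}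
    (h : ErgSub (fun _ p => Hp₁ p) (fun _ p => Hp₂ p) v₁ v₂ 0)
    (hH₁ : Continuous Hp₁) (hH₂ : Continuous Hp₂) (hzero₁ : Hp₁ 0 = 0) (hzero₂ : Hp₂ 0 = 0)
    (hξ₁ : HasStrictSubgradientAt Hp₁ ξ₁ 0) (hξ₂ : HasStrictSubgradientAt Hp₂ ξ₂ 0)
    (hv₁ : LipschitzWith K₁ v₁) (hv₂ : LipschitzWith K₂ v₂) (hper₁ : ZPeriodic v₁)
    (hper₂ : ZPeriodic v₂) : ∃ a, (∀ x, v₁ x = a) ∧ ∀ x, v₂ x = a := by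
  have hgrad : ∀ᵐ x, gradient v₁ x = 0 ∧ gradient v₂ x = 0 := by
    refine ae_gradient_eq_zero_of_add_le hξ₁ hξ₂ hv₁ hv₂ hper₁.periodic_basisFun
      hper₂.periodic_basisFun ?_
    filter_upwards [hv₁.ae_differentiableAt, hv₂.ae_differentiableAt] with x hd₁ hd₂
    rw [hzero₁, hzero₂]
    exact h.add_le_of_differentiableAt hH₁ hH₂ hv₁.continuous hv₂.continuous hd₁ hd₂
  have hconst₁ := eq_of_ae_gradient_eq_zero hv₁ (hgrad.mono fun _ => And.left)
  have hconst₂ := eq_of_ae_gradient_eq_zero hv₂ (hgrad.mono fun _ => And.right)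
  have hle₁ := h.1.le_of_isLocalMax (x := 0) (Eventually.of_forall fun y => (hconst₁ y 0).le)
  have hle₂ := h.2.le_of_isLocalMax (x := 0) (Eventually.of_forall fun y => (hconst₂ y 0).le)
  have heq : v₂ 0 = v₁ 0 := by linarith
  exact ⟨v₁ 0, fun x => hconst₁ x 0, fun x => (hconst₂ x 0).trans heq⟩

end ConvexHamiltonian

theorem stmt10_general (n : ℕ) (Hp₁ Hp₂ : En n → ℝ)
    (hH₁cont : Continuous Hp₁) (hH₂cont : Continuous Hp₂)
    (hsubgrad₁ : ∃ ξ, HasStrictSubgradientAt Hp₁ ξ 0)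
    (hsubgrad₂ : ∃ ξ, HasStrictSubgradientAt Hp₂ ξ 0)
    (hzero₁ : Hp₁ 0 = 0) (hzero₂ : Hp₂ 0 = 0) :
    (∃ v₁ v₂ : En n → ℝ, ZPeriodic v₁ ∧ ZPeriodic v₂ ∧
        ErgSolution (fun _ p => Hp₁ p) (fun _ p => Hp₂ p) v₁ v₂ 0) ∧
    (∀ (c : ℝ) (v₁ v₂ : En n → ℝ), ZPeriodic v₁ → ZPeriodic v₂ →
        ErgSolution (fun _ p => Hp₁ p) (fun _ p => Hp₂ p) v₁ v₂ c → c = 0) ∧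
    (∀ v₁ v₂ : En n → ℝ, IsLip v₁ → IsLip v₂ → ZPeriodic v₁ → ZPeriodic v₂ →
        ErgSub (fun _ p => Hp₁ p) (fun _ p => Hp₂ p) v₁ v₂ 0 →
        ∃ a : ℝ, (∀ x, v₁ x = a) ∧ (∀ x, v₂ x = a)) := by
  obtain ⟨ξ₁, hξ₁⟩ := hsubgrad₁
  obtain ⟨ξ₂, hξ₂⟩ := hsubgrad₂
  refine ⟨⟨fun _ => 0, fun _ => 0, fun _ _ => rfl, fun _ _ => rfl,
    cellSolution_const 1 1 0 (fun _ => hzero₁) fun _ => hzero₂⟩, ?_, ?_⟩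
  · rintro c v₁ v₂ hper₁ hper₂ ⟨hv₁, hv₂, hsub, hsuper⟩
    exact le_antisymm
      (ErgSuper.nonpos hsuper (fun _ => hzero₁.le) (fun _ => hzero₂.le) hv₁ hv₂ hper₁ hper₂)
      (ErgSub.nonneg hsub (fun _ => hzero₁.ge) (fun _ => hzero₂.ge) hv₁ hv₂ hper₁ hper₂)
  · rintro v₁ v₂ ⟨K₁, hv₁⟩ ⟨K₂, hv₂⟩ hper₁ hper₂ hsub
    exact hsub.exists_eq_const hH₁cont hH₂cont hzero₁ hzero₂ hξ₁ hξ₂ hv₁ hv₂ hper₁ hper₂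

/-- Proposition 4.1: in Case 2 the ergodic constant is `0` and the only Lipschitz
subsolutions of (E) with `c = 0` are the constant pairs `(a, a)`. -/
theorem stmt10 (n : ℕ) (hn : 1 ≤ n) (Hp₁ Hp₂ : En n → ℝ)
    (hH₁cont : Continuous Hp₁) (hH₂cont : Continuous Hp₂)
    (hH₁coer : CoerciveP Hp₁) (hH₂coer : CoerciveP Hp₂)
    (hA6₁ : UnifConvex Hp₁) (hA6₂ : UnifConvex Hp₂)
    (hA7₁ : Hp₁ 0 = 0) (hA7₂ : Hp₂ 0 = 0) :
    (∃ v₁ v₂ : En n → ℝ, ZPeriodic v₁ ∧ ZPeriodic v₂ ∧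
        ErgSolution (fun _ p => Hp₁ p) (fun _ p => Hp₂ p) v₁ v₂ 0) ∧
    (∀ (c : ℝ) (v₁ v₂ : En n → ℝ), ZPeriodic v₁ → ZPeriodic v₂ →
        ErgSolution (fun _ p => Hp₁ p) (fun _ p => Hp₂ p) v₁ v₂ c → c = 0) ∧
    (∀ v₁ v₂ : En n → ℝ, IsLip v₁ → IsLip v₂ → ZPeriodic v₁ → ZPeriodic v₂ →
        ErgSub (fun _ p => Hp₁ p) (fun _ p => Hp₂ p) v₁ v₂ 0 →
        ∃ a : ℝ, (∀ x, v₁ x = a) ∧ (∀ x, v₂ x = a)) :=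
  stmt10_general n Hp₁ Hp₂ hH₁cont hH₂cont (hA6₁.exists_hasStrictSubgradientAt hH₁cont 0)
    (hA6₂.exists_hasStrictSubgradientAt hH₂cont 0) hA7₁ hA7₂
end

section
/- (Monotonicity of extrema.) Assume the Hamiltonians are independent of x, H_i(x,p) = H_i(p) for i = 1,2, with each H_i continuous, coercive, uniformly convex ((A6)) and satisfying H_i(0) = 0 ((A7)). Let (u₁, u₂) be the viscosity solution of (C) with Lipschitz continuous initial data. Define M(t) := max_{i=1,2} max_{x ∈ 𝕋^n} u_i(x,t) and m(t) := min_{i=1,2} min_{x ∈ 𝕋^n} u_i(x,t). Then t ↦ M(t) is nonincreasing and t ↦ m(t) is nondecreasing on [0,∞). -/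
open MeasureTheory Filter Topology Set

/-!
At a maximum point of `max u₁ u₂ - g(t)` the test function `g`, whose spatial gradient is zero,
touches the larger component from above up to a constant. The coupling term of that component is
nonnegative, so `H(x, 0) ≥ 0` leaves `g' ≤ 0`: the maximum `w` of the components satisfies `∂ₜw ≤ 0`
against test functions of time alone. If `w` exceeded `M + ε` somewhere at time `t`, while staying
below `M` at time `s`, subtract `g(τ) = ε exp(k(τ - t))` with `k` large: the maximum of `w - g` over
`[s, t + 1]` is then attained at an interior time, although `g' > 0`. The claim on minima is the
claim on maxima for `(-u₁, -u₂)`, which is a subsolution for the Hamiltonians `-H(x, -p)`.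
-/

lemma real_iSup_neg {ι : Sort*} (f : ι → ℝ) : ⨆ i, -f i = -⨅ i, f i := by
  rw [iSup, iInf, ← Real.sSup_neg, ← image_neg_eq_neg, ← range_comp]
  rfl

lemma exists_contDiff_deriv_pos_eq_lt {t T ε : ℝ} (htT : t < T) (hε : 0 < ε) (B : ℝ) :
    ∃ g : ℝ → ℝ, ContDiff ℝ 1 g ∧ (∀ τ, 0 < g τ) ∧ (∀ τ, 0 < deriv g τ) ∧ g t = ε ∧ B < g T := by
  have hlim : Tendsto (fun k : ℝ => ε * Real.exp (k * (T - t))) atTop atTop :=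
    (Real.tendsto_exp_atTop.comp
      (tendsto_id.atTop_mul_const (sub_pos.2 htT))).const_mul_atTop hε
  obtain ⟨k, hB, hk⟩ := ((hlim.eventually_gt_atTop B).and (eventually_gt_atTop 0)).exists
  refine ⟨fun τ => ε * Real.exp (k * (τ - t)), by fun_prop, fun τ => by positivity,
    fun τ => ?_, by simp, hB⟩
  have hderiv : HasDerivAt (fun τ => ε * Real.exp (k * (τ - t)))
      (ε * (Real.exp (k * (τ - t)) * (k * 1))) τ :=
    (((hasDerivAt_id τ).sub_const t).const_mul k).exp.const_mul ε
  rw [hderiv.deriv]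
  positivity

lemma exists_isCompact_forall_exists_add_intVec_mem (n : ℕ) :
    ∃ K : Set (En n), IsCompact K ∧ ∀ x, ∃ k : Fin n → ℤ, x + intVec n k ∈ K := by
  refine ⟨WithLp.toLp 2 '' Icc 0 1, isCompact_Icc.image (PiLp.continuous_toLp 2 _), fun x =>
    ⟨fun i => -⌊x i⌋, fun i => Int.fract (x i),
      ⟨fun i => Int.fract_nonneg _, fun i => (Int.fract_lt_one _).le⟩, ?_⟩⟩
  ext i
  simp [intVec, Int.fract, sub_eq_add_neg]

section

variable {n : ℕ} {u v w : En n × ℝ → ℝ}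

namespace ZPeriodicST

lemma neg (hu : ZPeriodicST u) : ZPeriodicST (-u) := fun x k t =>
  congrArg Neg.neg (hu x k t)

lemma sup (hu : ZPeriodicST u) (hv : ZPeriodicST v) : ZPeriodicST (u ⊔ v) := fun x k t =>
  congrArg₂ max (hu x k t) (hv x k t)

lemma sub_comp_snd (hu : ZPeriodicST u) (g : ℝ → ℝ) :
    ZPeriodicST fun q => u q - g q.2 := fun x k t =>
  congrArg (· - g t) (hu x k t)

lemma exists_isMaxOn (hu : ZPeriodicST u) {J : Set ℝ} (hJ : IsCompact J) (hne : J.Nonempty)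
    (husc : UpperSemicontinuousOn u (Prod.snd ⁻¹' J)) :
    ∃ q ∈ Prod.snd ⁻¹' J, IsMaxOn u (Prod.snd ⁻¹' J) q := by
  obtain ⟨K, hK, hcover⟩ := exists_isCompact_forall_exists_add_intVec_mem n
  have hKne : K.Nonempty := ⟨_, (hcover 0).choose_spec⟩
  obtain ⟨q₀, hq₀, hmax⟩ := (husc.mono fun q hq => hq.2).exists_isMaxOn
    (hKne.prod hne) (hK.prod hJ)
  refine ⟨q₀, hq₀.2, fun ⟨x, t⟩ ht => ?_⟩
  obtain ⟨k, hk⟩ := hcover x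
  exact (hu x k t).symm.trans_le (hmax (mk_mem_prod hk ht))

end ZPeriodicST

/-- The differential inequality `∂ₜw ≤ 0` on `𝕋^n × (0,∞)` in the viscosity sense, where the test
functions are restricted to those depending on time alone. It is what remains of system (C) for
the maximum of the components, and suffices for the maximum principle. -/
def TimeSubsolution (w : En n × ℝ → ℝ) : Prop :=
  ∀ g : ℝ → ℝ, ContDiff ℝ 1 g → ∀ (x₀ : En n) (t₀ : ℝ), 0 < t₀ →
    IsLocalMax (fun q => w q - g q.2) (x₀, t₀) → deriv g t₀ ≤ 0

namespace TimeSubsolution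

theorem le_of_forall_le (hw : TimeSubsolution w) (hper : ZPeriodicST w)
    (husc : UpperSemicontinuousOn w {q | 0 ≤ q.2}) {s t M : ℝ} (hs : 0 ≤ s) (hst : s ≤ t)
    (hM : ∀ x, w (x, s) ≤ M) (x : En n) : w (x, t) ≤ M := by
  refine le_of_forall_pos_le_add fun ε hε => ?_
  by_contra! hlt
  have hne : (Icc s (t + 1)).Nonempty := nonempty_Icc.2 (by linarith)
  have husc' : UpperSemicontinuousOn w (Prod.snd ⁻¹' Icc s (t + 1)) :=
    husc.mono fun q hq => hs.trans hq.1
  obtain ⟨qB, -, hB⟩ := hper.exists_isMaxOn isCompact_Icc hne husc'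
  obtain ⟨g, hg, hgpos, hg', hgt, hgT⟩ :=
    exists_contDiff_deriv_pos_eq_lt (lt_add_one t) hε (w qB - M)
  have hgcont : Continuous fun q : En n × ℝ => -g q.2 := (hg.continuous.comp continuous_snd).neg
  obtain ⟨⟨y, τ⟩, hτ, hmax⟩ := (hper.sub_comp_snd g).exists_isMaxOn isCompact_Icc hne <| by
    simpa only [sub_eq_add_neg] using husc'.add hgcont.continuousOn.upperSemicontinuousOn
  have hval : M < w (y, τ) - g τ := by
    have hle : w (x, t) - g t ≤ w (y, τ) - g τ := hmax ⟨hst, by linarith⟩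
    linarith
  have hsτ : s ≠ τ := by
    rintro rfl
    linarith [hM y, hgpos s]
  have hτT : τ ≠ t + 1 := by
    rintro rfl
    have hle : w (y, t + 1) ≤ w qB := hB hτ
    linarith
  have hτ' : τ ∈ Ioo s (t + 1) := ⟨hτ.1.lt_of_ne hsτ, hτ.2.lt_of_ne hτT⟩
  have hloc : IsLocalMax (fun q => w q - g q.2) (y, τ) :=
    hmax.isLocalMax (continuousAt_snd.preimage_mem_nhds (Icc_mem_nhds hτ'.1 hτ'.2))
  exact (hw g hg y τ (hs.trans_lt hτ'.1) hloc).not_gt (hg' τ)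

theorem antitoneOn_iSup (hw : TimeSubsolution w) (hper : ZPeriodicST w)
    (husc : UpperSemicontinuousOn w {q | 0 ≤ q.2}) :
    AntitoneOn (fun t => ⨆ x, w (x, t)) (Ici 0) := by
  intro s hs t _ hst
  obtain ⟨q, -, hmax⟩ := hper.exists_isMaxOn (isCompact_singleton (x := s)) (singleton_nonempty s)
    (husc.mono fun q (hq : q.2 = s) => hs.trans_eq hq.symm)
  have hbdd : BddAbove (range fun x => w (x, s)) :=
    ⟨w q, forall_mem_range.2 fun x => hmax rfl⟩
  exact ciSup_le <| hw.le_of_forall_le hper husc hs hst (le_ciSup hbdd)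

end TimeSubsolution

variable {H H₁ H₂ : En n → En n → ℝ} {u₁ u₂ : En n × ℝ → ℝ}

lemma EvolSubIneq.deriv_add_sub_nonpos (h : EvolSubIneq H u v) (hH : ∀ x, 0 ≤ H x 0)
    {g : ℝ → ℝ} (hg : ContDiff ℝ 1 g) {x₀ : En n} {t₀ : ℝ} (ht₀ : 0 < t₀)
    (hmax : IsLocalMax (fun q => u q - g q.2) (x₀, t₀)) :
    deriv g t₀ + u (x₀, t₀) - v (x₀, t₀) ≤ 0 := by
  have hderiv : fderiv ℝ (fun q : En n × ℝ => g q.2) (x₀, t₀) (0, 1) = deriv g t₀ := by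
    have hcomp := (hg.differentiable one_ne_zero t₀).hasDerivAt.comp_hasFDerivAt (x₀, t₀)
      (hasFDerivAt_snd (𝕜 := ℝ) (E := En n) (F := ℝ))
    simpa [Function.comp_def] using congrArg (· (0, 1)) hcomp.fderiv
  have hineq := h (fun q => g q.2) (hg.comp contDiff_snd) x₀ t₀ ht₀ hmax
  simp only [hderiv, gradient_fun_const] at hineq
  linarith [hH x₀]

lemma EvolSuperIneq.neg (h : EvolSuperIneq H u v) :
    EvolSubIneq (fun x p => -H x (-p)) (-u) (-v) := by
  intro φ hφ x₀ t₀ ht₀ hmax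
  have hmin : IsLocalMin (fun q => u q - (-φ) q) (x₀, t₀) :=
    hmax.neg.congr (.of_forall fun q => by simp only [Pi.neg_apply]; ring)
  have hgrad : gradient (fun y => (-φ) (y, t₀)) x₀ = -gradient (fun y => φ (y, t₀)) x₀ := by
    simp [gradient]
  have hineq := h (-φ) hφ.neg x₀ t₀ ht₀ hmin
  rw [hgrad, fderiv_neg] at hineq
  simp only [neg_apply, Pi.neg_apply] at hineq ⊢
  linarith

lemma SysSuper.neg (h : SysSuper H₁ H₂ u₁ u₂) :
    SysSub (fun x p => -H₁ x (-p)) (fun x p => -H₂ x (-p)) (-u₁) (-u₂) :=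
  ⟨h.1.neg, h.2.neg⟩

theorem SysSub.timeSubsolution_sup (h : SysSub H₁ H₂ u₁ u₂)
    (hH₁ : ∀ x, 0 ≤ H₁ x 0) (hH₂ : ∀ x, 0 ≤ H₂ x 0) : TimeSubsolution (u₁ ⊔ u₂) := by
  intro g hg x₀ t₀ ht₀ hmax
  wlog hle : u₂ (x₀, t₀) ≤ u₁ (x₀, t₀) generalizing H₁ H₂ u₁ u₂
  · exact this ⟨h.2, h.1⟩ hH₂ hH₁ (by rwa [sup_comm]) (le_of_not_ge hle)
  have hmax₁ : IsLocalMax (fun q => u₁ q - g q.2) (x₀, t₀) := by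
    filter_upwards [hmax] with q hq
    simp only [Pi.sup_apply, sup_of_le_left hle] at hq
    exact (sub_le_sub_right le_sup_left _).trans hq
  linarith [h.1.deriv_add_sub_nonpos hH₁ hg ht₀ hmax₁]

theorem SysSub.antitoneOn_iSup_max (h : SysSub H₁ H₂ u₁ u₂)
    (hH₁ : ∀ x, 0 ≤ H₁ x 0) (hH₂ : ∀ x, 0 ≤ H₂ x 0)
    (hper₁ : ZPeriodicST u₁) (hper₂ : ZPeriodicST u₂)
    (husc₁ : UpperSemicontinuousOn u₁ {q | 0 ≤ q.2})
    (husc₂ : UpperSemicontinuousOn u₂ {q | 0 ≤ q.2}) :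
    AntitoneOn (fun t => ⨆ x, max (u₁ (x, t)) (u₂ (x, t))) (Ici 0) :=
  (h.timeSubsolution_sup hH₁ hH₂).antitoneOn_iSup (hper₁.sup hper₂) (husc₁.sup husc₂)

theorem SysSuper.monotoneOn_iInf_min (h : SysSuper H₁ H₂ u₁ u₂)
    (hH₁ : ∀ x, H₁ x 0 ≤ 0) (hH₂ : ∀ x, H₂ x 0 ≤ 0)
    (hper₁ : ZPeriodicST u₁) (hper₂ : ZPeriodicST u₂)
    (hlsc₁ : LowerSemicontinuousOn u₁ {q | 0 ≤ q.2})
    (hlsc₂ : LowerSemicontinuousOn u₂ {q | 0 ≤ q.2}) :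
    MonotoneOn (fun t => ⨅ x, min (u₁ (x, t)) (u₂ (x, t))) (Ici 0) := by
  have hanti := h.neg.antitoneOn_iSup_max (by simpa using hH₁) (by simpa using hH₂)
    hper₁.neg hper₂.neg hlsc₁.neg hlsc₂.neg
  simp only [Pi.neg_apply, max_neg_neg, real_iSup_neg] at hanti
  simpa only [neg_neg] using hanti.neg

theorem stmt11_general {u₀₁ u₀₂ : En n → ℝ} (hH₁ : ∀ x, H₁ x 0 = 0) (hH₂ : ∀ x, H₂ x 0 = 0)
    (hper₁ : ZPeriodicST u₁) (hper₂ : ZPeriodicST u₂)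
    (hsol : SysSolution H₁ H₂ u₀₁ u₀₂ u₁ u₂) :
    AntitoneOn (fun t => ⨆ x, max (u₁ (x, t)) (u₂ (x, t))) (Ici 0) ∧
      MonotoneOn (fun t => ⨅ x, min (u₁ (x, t)) (u₂ (x, t))) (Ici 0) := by
  obtain ⟨hcont₁, hcont₂, hsub, hsuper, -, -⟩ := hsol
  exact ⟨hsub.antitoneOn_iSup_max (fun x => (hH₁ x).ge) (fun x => (hH₂ x).ge) hper₁ hper₂
      hcont₁.upperSemicontinuousOn hcont₂.upperSemicontinuousOn,
    hsuper.monotoneOn_iInf_min (fun x => (hH₁ x).le) (fun x => (hH₂ x).le) hper₁ hper₂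
      hcont₁.lowerSemicontinuousOn hcont₂.lowerSemicontinuousOn⟩

end

/-- Lemma 4.2: `M(t) = max_i max_x uᵢ(x,t)` is nonincreasing and
`m(t) = min_i min_x uᵢ(x,t)` is nondecreasing. -/
theorem stmt11 (n : ℕ) (hn : 1 ≤ n) (Hp₁ Hp₂ : En n → ℝ)
    (hH₁cont : Continuous Hp₁) (hH₂cont : Continuous Hp₂)
    (hH₁coer : CoerciveP Hp₁) (hH₂coer : CoerciveP Hp₂)
    (hA6₁ : UnifConvex Hp₁) (hA6₂ : UnifConvex Hp₂)
    (hA7₁ : Hp₁ 0 = 0) (hA7₂ : Hp₂ 0 = 0)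
    (u₀₁ u₀₂ : En n → ℝ) (hu₀₁ : IsLip u₀₁) (hu₀₂ : IsLip u₀₂)
    (hu₀₁per : ZPeriodic u₀₁) (hu₀₂per : ZPeriodic u₀₂)
    (u₁ u₂ : En n × ℝ → ℝ) (hu₁per : ZPeriodicST u₁) (hu₂per : ZPeriodicST u₂)
    (hsol : SysSolution (fun _ p => Hp₁ p) (fun _ p => Hp₂ p) u₀₁ u₀₂ u₁ u₂) :
    (∀ s t : ℝ, 0 ≤ s → s ≤ t →
      (⨆ x : En n, max (u₁ (x, t)) (u₂ (x, t))) ≤ ⨆ x : En n, max (u₁ (x, s)) (u₂ (x, s))) ∧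
    (∀ s t : ℝ, 0 ≤ s → s ≤ t →
      (⨅ x : En n, min (u₁ (x, s)) (u₂ (x, s))) ≤ ⨅ x : En n, min (u₁ (x, t)) (u₂ (x, t))) := by
  have hmono := stmt11_general (fun _ => hA7₁) (fun _ => hA7₂) hu₁per hu₂per hsol
  exact ⟨fun s t hs hst => hmono.1 hs (hs.trans hst) hst,
    fun s t hs hst => hmono.2 hs (hs.trans hst) hst⟩
end

section
/- Assume H := H₁ = H₂ is continuous and satisfies (A1), and let (u₁, u₂) be the viscosity solution of (C) with Lipschitz continuous initial data (u₀₁, u₀₂). Then |u₁(x,t) − u₂(x,t)| ≤ ‖u₀₁ − u₀₂‖_{L^∞(𝕋^n)} e^{−2t} for all (x,t) ∈ 𝕋^n × [0,∞); in particular, u₁(·,t) − u₂(·,t) → 0 uniformly on 𝕋^n as t → ∞. -/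
open MeasureTheory Filter Topology Set

/-!
The difference `w = u₁ - u₂` formally satisfies `∂ₜ w + 2 w = 0` at a spatial maximum, because there
the two Hamiltonian terms coincide. This is made rigorous by doubling the variables: maximise
`u₁(x,t) - u₂(y,s) - ψ(t) - A |x - y|² - B (t - s)²`, where `ψ` satisfies `ψ' + 2 ψ > 0`. Coercivity
bounds the common momentum `p = 2 A (x - y)` independently of `A`, so `H(x,p) - H(y,p)` is small
once `A` is large, and a positive maximum is contradictory unless it lies at the ends of the time
interval. The comparison function `ψ(t) = M e^{-2t} + η e^{K(t-T)}` excludes both ends: `w(·,0) ≤ M`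
takes care of `t = 0`, and for `K` large `ψ` exceeds `sup w` at time `T + 1`. Letting `η → 0` gives
`w(·,T) ≤ M e^{-2T}`, and exchanging `u₁` and `u₂` gives the lower bound.
-/

section Periodic

variable {n : ℕ}

theorem exists_norm_add_intVec_le (x : En n) : ∃ k : Fin n → ℤ, ‖x + intVec n k‖ ≤ √n := by
  refine ⟨fun i => -⌊x i⌋, ?_⟩
  have coord_eq_fract (i : Fin n) : (x + intVec n fun i => -⌊x i⌋) i = Int.fract (x i) := by
    simp [intVec, Int.fract, sub_eq_add_neg]
  rw [EuclideanSpace.norm_eq]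
  refine Real.sqrt_le_sqrt ?_
  calc ∑ i, ‖(x + intVec n fun i => -⌊x i⌋) i‖ ^ 2
    _ ≤ ∑ _i : Fin n, (1 : ℝ) := by
        refine Finset.sum_le_sum fun i _ => pow_le_one₀ (norm_nonneg _) ?_
        rw [coord_eq_fract, Real.norm_of_nonneg (Int.fract_nonneg _)]
        exact (Int.fract_lt_one _).le
    _ = n := by simp

theorem isCompact_image_of_periodic {Y Z : Type*} [TopologicalSpace Y] [TopologicalSpace Z]
    {f : En n × Y → Z} {K : Set Y} (hK : IsCompact K) (hf : ContinuousOn f (univ ×ˢ K))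
    (hper : ∀ x k y, f (x + intVec n k, y) = f (x, y)) : IsCompact (f '' (univ ×ˢ K)) := by
  have image_eq : f '' (univ ×ˢ K) = f '' (Metric.closedBall 0 √n ×ˢ K) := by
    refine (image_subset_iff.2 ?_).antisymm (image_mono (prod_mono_left (subset_univ _)))
    rintro ⟨x, y⟩ ⟨-, hy⟩
    obtain ⟨k, hk⟩ := exists_norm_add_intVec_le x
    exact ⟨(x + intVec n k, y), ⟨by simpa using hk, hy⟩, hper x k y⟩
  rw [image_eq]
  exact ((isCompact_closedBall _ _).prod hK).image_of_continuousOn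
    (hf.mono (prod_mono_left (subset_univ _)))

theorem uniformContinuousOn_of_periodic {Y Z : Type*} [PseudoMetricSpace Y] [PseudoMetricSpace Z]
    {f : En n × Y → Z} {K : Set Y} (hK : IsCompact K) (hf : ContinuousOn f (univ ×ˢ K))
    (hper : ∀ x k y, f (x + intVec n k, y) = f (x, y)) : UniformContinuousOn f (univ ×ˢ K) := by
  have huc : UniformContinuousOn f (Metric.closedBall 0 (√n + 1) ×ˢ K) :=
    ((isCompact_closedBall _ _).prod hK).uniformContinuousOn_of_continuous
      (hf.mono (prod_mono_left (subset_univ _)))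
  rw [Metric.uniformContinuousOn_iff] at huc ⊢
  intro ε hε
  obtain ⟨r, hr, hfr⟩ := huc ε hε
  refine ⟨min r 1, by positivity, ?_⟩
  rintro ⟨x, s⟩ ⟨-, hs⟩ ⟨y, t⟩ ⟨-, ht⟩ hdist
  obtain ⟨hdist_r, hdist_one⟩ := lt_min_iff.1 hdist
  obtain ⟨k, hk⟩ := exists_norm_add_intVec_le x
  have hdist_eq : dist (x + intVec n k, s) (y + intVec n k, t) = dist (x, s) (y, t) := by
    simp only [Prod.dist_eq, dist_add_right]
  have hy : ‖y + intVec n k‖ ≤ √n + 1 := by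
    have hxy : ‖(y + intVec n k) - (x + intVec n k)‖ ≤ 1 := by
      rw [add_sub_add_right_eq_sub, ← dist_eq_norm, dist_comm]
      exact (le_max_left _ _).trans hdist_one.le
    linarith [norm_le_norm_add_norm_sub' (y + intVec n k) (x + intVec n k)]
  rw [← hper x k s, ← hper y k t]
  refine hfr (x + intVec n k, s) ⟨?_, hs⟩ (y + intVec n k, t) ⟨?_, ht⟩ (hdist_eq.trans_lt hdist_r)
  · exact mem_closedBall_zero_iff.2 (by linarith)
  · exact mem_closedBall_zero_iff.2 hy

end Periodic

section TestFunctions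

theorem gradient_add_const {E : Type*} [NormedAddCommGroup E] [InnerProductSpace ℝ E]
    [CompleteSpace E] (f : E → ℝ) (c : ℝ) (x : E) :
    gradient (fun y => f y + c) x = gradient f x := by
  rw [gradient, fderiv_add_const, gradient]

theorem gradient_const_mul_norm_sub_sq {E : Type*} [NormedAddCommGroup E] [InnerProductSpace ℝ E]
    [CompleteSpace E] (A : ℝ) (z x : E) :
    gradient (fun y : E => A * ‖y - z‖ ^ 2) x = (2 * A) • (x - z) := by
  apply HasGradientAt.gradient
  rw [hasGradientAt_iff_hasFDerivAt]
  refine (((hasFDerivAt_id x).sub_const z).norm_sq.const_mul A).congr_fderiv ?_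
  ext v
  simp
  ring

theorem hasDerivAt_const_mul_sub_sq (c s t : ℝ) :
    HasDerivAt (fun τ => c * (τ - s) ^ 2) (2 * c * (t - s)) t := by
  refine ((((hasDerivAt_id' t).sub_const s).fun_pow 2).const_mul c).congr_deriv ?_
  push_cast
  ring

theorem fderiv_add_separated_apply_zero_one {E : Type*} [NormedAddCommGroup E] [NormedSpace ℝ E]
    {f : E → ℝ} {g : ℝ → ℝ} {x : E} {t : ℝ} (hf : DifferentiableAt ℝ f x)
    (hg : DifferentiableAt ℝ g t) :
    fderiv ℝ (fun q : E × ℝ => f q.1 + g q.2) (x, t) (0, 1) = deriv g t := by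
  have hf' : HasFDerivAt (fun q : E × ℝ => f q.1) (fderiv ℝ f x ∘L .fst ℝ E ℝ) (x, t) :=
    hf.hasFDerivAt.comp (x, t) hasFDerivAt_fst
  have hg' : HasFDerivAt (fun q : E × ℝ => g q.2) (fderiv ℝ g t ∘L .snd ℝ E ℝ) (x, t) :=
    hg.hasFDerivAt.comp (x, t) hasFDerivAt_snd
  rw [(hf'.fun_add hg').fderiv]
  simp

variable {n : ℕ} {H : En n → En n → ℝ} {u uo : En n × ℝ → ℝ} {f : En n → ℝ} {g : ℝ → ℝ}
  {x : En n} {t : ℝ}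

theorem EvolSubIneq.of_separated (hu : EvolSubIneq H u uo) (hf : ContDiff ℝ 1 f)
    (hg : ContDiff ℝ 1 g) (ht : 0 < t)
    (hmax : IsLocalMax (fun q => u q - (f q.1 + g q.2)) (x, t)) :
    deriv g t + H x (gradient f x) + u (x, t) - uo (x, t) ≤ 0 := by
  have := hu (fun q => f q.1 + g q.2) (by fun_prop) x t ht hmax
  simpa only [fderiv_add_separated_apply_zero_one (hf.differentiable one_ne_zero x)
    (hg.differentiable one_ne_zero t), gradient_add_const] using this

theorem EvolSuperIneq.of_separated (hu : EvolSuperIneq H u uo) (hf : ContDiff ℝ 1 f)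
    (hg : ContDiff ℝ 1 g) (ht : 0 < t)
    (hmin : IsLocalMin (fun q => u q - (f q.1 + g q.2)) (x, t)) :
    0 ≤ deriv g t + H x (gradient f x) + u (x, t) - uo (x, t) := by
  have := hu (fun q => f q.1 + g q.2) (by fun_prop) x t ht hmin
  simpa only [fderiv_add_separated_apply_zero_one (hf.differentiable one_ne_zero x)
    (hg.differentiable one_ne_zero t), gradient_add_const] using this

end TestFunctions

section Doubling

variable {n : ℕ}

/-- The function with doubled variables
`u(x,t) - v(y,s) - ψ(t) - A |x - y|² - B (t - s)²` at `z = ((x, t), (y, s))`. -/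
noncomputable def doubled (u v : En n × ℝ → ℝ) (ψ : ℝ → ℝ) (A B : ℝ)
    (z : (En n × ℝ) × (En n × ℝ)) : ℝ :=
  u z.1 - v z.2 - ψ z.1.2 - A * ‖z.1.1 - z.2.1‖ ^ 2 - B * (z.1.2 - z.2.2) ^ 2

/-- The space-time strip `𝕋^n × [0, T]`, unrolled to `ℝ^n × [0, T]`. -/
abbrev strip (n : ℕ) (T : ℝ) : Set (En n × ℝ) := univ ×ˢ Icc 0 T

variable {H : En n → En n → ℝ} {u v uo vo : En n × ℝ → ℝ} {ψ : ℝ → ℝ} {A B : ℝ}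

theorem EvolSubIneq.of_isLocalMax_doubled (hu : EvolSubIneq H u uo) (hψ : ContDiff ℝ 1 ψ)
    {x y : En n} {t s : ℝ} (ht : 0 < t)
    (hmax : IsLocalMax (doubled u v ψ A B) ((x, t), (y, s))) :
    deriv ψ t + 2 * B * (t - s) + H x ((2 * A) • (x - y)) + u (x, t) - uo (x, t) ≤ 0 := by
  have hmax_left : IsLocalMax (fun q => u q - (A * ‖q.1 - y‖ ^ 2 + (B * (q.2 - s) ^ 2 + ψ q.2)))
      (x, t) := by
    have hslice : ∀ᶠ q in 𝓝 (x, t),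
        doubled u v ψ A B (q, (y, s)) ≤ doubled u v ψ A B ((x, t), (y, s)) :=
      (Continuous.prodMk_left (y, s)).continuousAt.eventually hmax
    filter_upwards [hslice] with q hq
    simp only [doubled] at hq
    linarith
  have hderiv : HasDerivAt (fun τ => B * (τ - s) ^ 2 + ψ τ) (2 * B * (t - s) + deriv ψ t) t :=
    (hasDerivAt_const_mul_sub_sq B s t).fun_add (hψ.differentiable one_ne_zero t).hasDerivAt
  have := hu.of_separated (f := fun x' => A * ‖x' - y‖ ^ 2) (g := fun τ => B * (τ - s) ^ 2 + ψ τ)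
    (((contDiff_id.sub contDiff_const).norm_sq ℝ).const_smul A) (by fun_prop) ht hmax_left
  rw [hderiv.deriv, gradient_const_mul_norm_sub_sq] at this
  linarith

theorem EvolSuperIneq.of_isLocalMax_doubled (hv : EvolSuperIneq H v vo)
    {x y : En n} {t s : ℝ} (hs : 0 < s)
    (hmax : IsLocalMax (doubled u v ψ A B) ((x, t), (y, s))) :
    0 ≤ 2 * B * (t - s) + H y ((2 * A) • (x - y)) + v (y, s) - vo (y, s) := by
  have hmin_right : IsLocalMin (fun q => v q - (-A * ‖q.1 - x‖ ^ 2 + -B * (q.2 - t) ^ 2))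
      (y, s) := by
    have hslice : ∀ᶠ q in 𝓝 (y, s),
        doubled u v ψ A B ((x, t), q) ≤ doubled u v ψ A B ((x, t), (y, s)) :=
      (Continuous.prodMk_right (x, t)).continuousAt.eventually hmax
    filter_upwards [hslice] with q hq
    simp only [doubled, norm_sub_rev x, sub_sq_comm t] at hq
    linarith
  have hderiv : 2 * -B * (s - t) = 2 * B * (t - s) := by ring
  have hgrad : (2 * -A) • (y - x) = (2 * A) • (x - y) := by
    rw [← neg_sub x y, smul_neg, ← neg_smul, mul_neg, neg_neg]
  have := hv.of_separated (f := fun y' => -A * ‖y' - x‖ ^ 2) (g := fun τ => -B * (τ - t) ^ 2)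
    (((contDiff_id.sub contDiff_const).norm_sq ℝ).const_smul (-A)) (by fun_prop) hs hmin_right
  rwa [(hasDerivAt_const_mul_sub_sq (-B) t s).deriv, gradient_const_mul_norm_sub_sq, hderiv,
    hgrad] at this

theorem norm_sub_lt_of_doubled_nonneg {ρ : ℝ} {z : (En n × ℝ) × (En n × ℝ)} (hA : 0 ≤ A)
    (hB : 0 ≤ B) (hρ : 0 ≤ ρ) (hbound : u z.1 - v z.2 - ψ z.1.2 < A * ρ ^ 2)
    (hz : 0 ≤ doubled u v ψ A B z) : ‖z.1.1 - z.2.1‖ < ρ := by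
  have hpenalty : 0 ≤ B * (z.1.2 - z.2.2) ^ 2 := by positivity
  have : A * ‖z.1.1 - z.2.1‖ ^ 2 < A * ρ ^ 2 := by
    unfold doubled at hz
    linarith
  exact lt_of_pow_lt_pow_left₀ 2 hρ (lt_of_mul_lt_mul_left this hA)

theorem abs_sub_lt_of_doubled_nonneg {r : ℝ} {z : (En n × ℝ) × (En n × ℝ)} (hA : 0 ≤ A)
    (hB : 0 ≤ B) (hr : 0 ≤ r) (hbound : u z.1 - v z.2 - ψ z.1.2 < B * r ^ 2)
    (hz : 0 ≤ doubled u v ψ A B z) : |z.1.2 - z.2.2| < r := by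
  have hpenalty : 0 ≤ A * ‖z.1.1 - z.2.1‖ ^ 2 := by positivity
  have : B * (z.1.2 - z.2.2) ^ 2 < B * r ^ 2 := by
    unfold doubled at hz
    linarith
  exact abs_lt_of_sq_lt_sq (lt_of_mul_lt_mul_left this hB) hr

theorem exists_isMaxOn_doubled_of_norm_sub_le {T ρ : ℝ} (hu : ContinuousOn u (strip n T))
    (hv : ContinuousOn v (strip n T)) (hψ : ContinuousOn ψ (Icc 0 T)) (hu_per : ZPeriodicST u)
    (hv_per : ZPeriodicST v) (hT : 0 ≤ T) (hρ : 0 ≤ ρ) :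
    ∃ z ∈ (strip n T ×ˢ strip n T) ∩ {z | ‖z.1.1 - z.2.1‖ ≤ ρ},
      IsMaxOn (doubled u v ψ A B) ((strip n T ×ˢ strip n T) ∩ {z | ‖z.1.1 - z.2.1‖ ≤ ρ}) z := by
  -- In the variables `x` and `h = y - x` the doubled function is periodic in `x`, with `h` bounded.
  let shear (q : En n × En n × ℝ × ℝ) : (En n × ℝ) × (En n × ℝ) :=
    ((q.1, q.2.2.1), (q.1 + q.2.1, q.2.2.2))
  let K : Set (En n × ℝ × ℝ) := Metric.closedBall 0 ρ ×ˢ Icc 0 T ×ˢ Icc 0 T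
  have hK : IsCompact K := (isCompact_closedBall _ _).prod (isCompact_Icc.prod isCompact_Icc)
  have shear_image : shear '' (univ ×ˢ K) =
      (strip n T ×ˢ strip n T) ∩ {z | ‖z.1.1 - z.2.1‖ ≤ ρ} := by
    ext ⟨⟨x, t⟩, ⟨y, s⟩⟩
    constructor
    · rintro ⟨⟨x, h, t, s⟩, ⟨-, hh, ht, hs⟩, ⟨⟩⟩
      exact ⟨⟨⟨mem_univ _, ht⟩, ⟨mem_univ _, hs⟩⟩, by simpa using hh⟩
    · rintro ⟨⟨⟨-, ht⟩, ⟨-, hs⟩⟩, hxy⟩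
      have hyx : y - x ∈ Metric.closedBall 0 ρ := by
        simpa [dist_eq_norm, norm_sub_rev] using hxy
      exact ⟨(x, y - x, t, s), ⟨mem_univ _, hyx, ht, hs⟩, by simp [shear]⟩
  have hcont : ContinuousOn (doubled u v ψ A B ∘ shear) (univ ×ˢ K) := by
    have hu' : ContinuousOn (fun q : En n × En n × ℝ × ℝ => u (q.1, q.2.2.1)) (univ ×ˢ K) :=
      hu.comp (by fun_prop) fun q hq => ⟨mem_univ _, hq.2.2.1⟩
    have hv' :
        ContinuousOn (fun q : En n × En n × ℝ × ℝ => v (q.1 + q.2.1, q.2.2.2)) (univ ×ˢ K) :=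
      hv.comp (by fun_prop) fun q hq => ⟨mem_univ _, hq.2.2.2⟩
    have hψ' : ContinuousOn (fun q : En n × En n × ℝ × ℝ => ψ q.2.2.1) (univ ×ˢ K) :=
      hψ.comp (by fun_prop) fun q hq => hq.2.2.1
    exact (((hu'.sub hv').sub hψ').sub (by fun_prop)).sub (by fun_prop)
  have hper (x : En n) (k : Fin n → ℤ) (y : En n × ℝ × ℝ) :
      (doubled u v ψ A B ∘ shear) (x + intVec n k, y) = (doubled u v ψ A B ∘ shear) (x, y) := by
    simp only [Function.comp, doubled, shear, add_right_comm x, hu_per x, hv_per (x + y.1),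
      add_sub_add_right_eq_sub]
  have hne : ((univ : Set (En n)) ×ˢ K).Nonempty := ⟨(0, 0, 0, 0), by simp [K, hρ, hT]⟩
  obtain ⟨_, ⟨q, hq, rfl⟩, hmax⟩ :=
    (isCompact_image_of_periodic hK hcont hper).exists_isGreatest (hne.image _)
  rw [← shear_image]
  refine ⟨shear q, mem_image_of_mem _ hq, ?_⟩
  rintro _ ⟨q', hq', rfl⟩
  exact hmax (mem_image_of_mem _ hq')

theorem exists_isMaxOn_doubled {T C ρ r : ℝ} (hu : ContinuousOn u (strip n T))
    (hv : ContinuousOn v (strip n T)) (hψ : ContinuousOn ψ (Icc 0 T)) (hu_per : ZPeriodicST u)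
    (hv_per : ZPeriodicST v) (hρ : 0 < ρ) (hr : 0 < r)
    (hbound : ∀ z ∈ strip n T ×ˢ strip n T, u z.1 - v z.2 - ψ z.1.2 < C)
    {q : En n × ℝ} (hq : q ∈ strip n T) (hq_nonneg : 0 ≤ u q - v q - ψ q.2) :
    ∃ z ∈ strip n T ×ˢ strip n T, ‖z.1.1 - z.2.1‖ < ρ ∧ |z.1.2 - z.2.2| < r ∧
      0 ≤ doubled u v ψ (C / ρ ^ 2) (C / r ^ 2) z ∧
      IsMaxOn (doubled u v ψ (C / ρ ^ 2) (C / r ^ 2)) (strip n T ×ˢ strip n T) z := by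
  set Φ := doubled u v ψ (C / ρ ^ 2) (C / r ^ 2)
  have hC : 0 < C := hq_nonneg.trans_lt (hbound (q, q) ⟨hq, hq⟩)
  have hA : 0 ≤ C / ρ ^ 2 := by positivity
  have hB : 0 ≤ C / r ^ 2 := by positivity
  have hAρ : C / ρ ^ 2 * ρ ^ 2 = C := div_mul_cancel₀ _ (by positivity)
  have hBr : C / r ^ 2 * r ^ 2 = C := div_mul_cancel₀ _ (by positivity)
  have norm_lt {z} (hz : z ∈ strip n T ×ˢ strip n T) (hΦ : 0 ≤ Φ z) : ‖z.1.1 - z.2.1‖ < ρ :=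
    norm_sub_lt_of_doubled_nonneg hA hB hρ.le ((hbound z hz).trans_eq hAρ.symm) hΦ
  obtain ⟨z, ⟨hz, -⟩, hmax⟩ := exists_isMaxOn_doubled_of_norm_sub_le (A := C / ρ ^ 2)
    (B := C / r ^ 2) hu hv hψ hu_per hv_per (hq.2.1.trans hq.2.2) hρ.le
  have hz_nonneg : 0 ≤ Φ z :=
    calc 0 ≤ Φ (q, q) := by simpa [Φ, doubled] using hq_nonneg
      _ ≤ Φ z := hmax ⟨⟨hq, hq⟩, by simpa using hρ.le⟩
  have abs_lt : |z.1.2 - z.2.2| < r :=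
    abs_sub_lt_of_doubled_nonneg hA hB hr.le ((hbound z hz).trans_eq hBr.symm) hz_nonneg
  refine ⟨z, hz, norm_lt hz hz_nonneg, abs_lt, hz_nonneg, fun z' hz' => ?_⟩
  rcases le_total 0 (Φ z') with hz'_nonneg | hz'_nonpos
  · exact hmax ⟨hz', (norm_lt hz' hz'_nonneg).le⟩
  · exact hz'_nonpos.trans hz_nonneg

end Doubling

section Comparison

variable {n : ℕ} {H : En n → En n → ℝ} {u₁ u₂ : En n × ℝ → ℝ} {ψ : ℝ → ℝ} {T δ : ℝ}

/-- `ψ` is a `C¹` supersolution of `y' + 2 y = 0` on `[0, T]` which exceeds `w` at both ends of the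
time interval, all three inequalities holding with margin `δ`. -/
structure IsStrictBarrier (w : En n × ℝ → ℝ) (T δ : ℝ) (ψ : ℝ → ℝ) : Prop where
  contDiff : ContDiff ℝ 1 ψ
  initial_le : ∀ x, w (x, 0) + δ ≤ ψ 0
  final_le : ∀ x, w (x, T) + δ ≤ ψ T
  le_deriv_add : ∀ t ∈ Icc 0 T, δ ≤ deriv ψ t + 2 * ψ t

theorem IsStrictBarrier.mem_Ioo {w : En n × ℝ → ℝ} (hψ : IsStrictBarrier w T δ ψ) {x : En n} {t : ℝ}
    (ht : t ∈ Icc 0 T) (hlt : ψ t < w (x, t) + δ) : t ∈ Ioo 0 T := by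
  refine ⟨ht.1.lt_of_ne' ?_, ht.2.lt_of_ne ?_⟩
  · rintro rfl
    exact (hψ.initial_le x).not_gt hlt
  · rintro rfl
    exact (hψ.final_le x).not_gt hlt

theorem IsStrictBarrier.hamiltonian_gap_of_isMaxOn_doubled {A B : ℝ} {x y : En n} {t s : ℝ}
    (hψ : IsStrictBarrier (u₁ - u₂) T δ ψ) (hsub : EvolSubIneq H u₁ u₂)
    (hsup : EvolSuperIneq H u₂ u₁) (hA : 0 ≤ A) (hB : 0 ≤ B)
    (ht : t ∈ Icc 0 T) (hs : s ∈ Icc 0 T)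
    (hmax : IsMaxOn (doubled u₁ u₂ ψ A B) (strip n T ×ˢ strip n T) ((x, t), (y, s)))
    (hnonneg : 0 ≤ doubled u₁ u₂ ψ A B ((x, t), (y, s)))
    (hu₁ : |u₁ (x, t) - u₁ (y, s)| < δ / 3) (hu₂ : |u₂ (x, t) - u₂ (y, s)| < δ / 3)
    (hψ_close : |ψ t - ψ s| < δ / 3) :
    deriv ψ t + 2 * B * (t - s) + H x ((2 * A) • (x - y)) + u₁ (x, t) - u₂ (x, t) ≤ 0 ∧
      δ / 3 < H y ((2 * A) • (x - y)) - H x ((2 * A) • (x - y)) := by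
  have hδ : 0 < δ / 3 := (abs_nonneg _).trans_lt hu₁
  have hψ_le : ψ t ≤ u₁ (x, t) - u₂ (y, s) := by
    have hpenalties : 0 ≤ A * ‖x - y‖ ^ 2 + B * (t - s) ^ 2 := by positivity
    unfold doubled at hnonneg
    linarith
  rw [abs_lt] at hu₁ hu₂ hψ_close
  have ht' : t ∈ Ioo 0 T := hψ.mem_Ioo (x := x) ht (by simp only [Pi.sub_apply]; linarith)
  have hs' : s ∈ Ioo 0 T := hψ.mem_Ioo (x := y) hs (by simp only [Pi.sub_apply]; linarith)
  have hlocal : IsLocalMax (doubled u₁ u₂ ψ A B) ((x, t), (y, s)) :=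
    hmax.isLocalMax (prod_mem_nhds (prod_mem_nhds univ_mem (Icc_mem_nhds ht'.1 ht'.2))
      (prod_mem_nhds univ_mem (Icc_mem_nhds hs'.1 hs'.2)))
  have hsub_ineq := hsub.of_isLocalMax_doubled hψ.contDiff ht'.1 hlocal
  have hsup_ineq := hsup.of_isLocalMax_doubled hs'.1 hlocal
  exact ⟨hsub_ineq, by linarith [hψ.le_deriv_add t ht]⟩

theorem Coercive.exists_modulus (hH_coer : Coercive H)
    (hH : Continuous fun q : En n × En n => H q.1 q.2) (hH_per : ZPeriodicH H) (M : ℝ) {ε : ℝ}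
    (hε : 0 < ε) : ∃ r > 0, ∀ x y p, ‖x - y‖ < r → H x p < M → |H x p - H y p| < ε := by
  obtain ⟨R, hR⟩ := hH_coer M
  have huc : UniformContinuousOn (fun q : En n × En n => H q.1 q.2)
      (univ ×ˢ Metric.closedBall 0 R) :=
    uniformContinuousOn_of_periodic (isCompact_closedBall 0 R) hH.continuousOn hH_per
  obtain ⟨r, hr, hclose⟩ := Metric.uniformContinuousOn_iff.1 huc ε hε
  refine ⟨r, hr, fun x y p hxy hM => ?_⟩
  have hp : p ∈ Metric.closedBall 0 R :=
    mem_closedBall_zero_iff.2 (lt_of_not_ge fun hp => (hR x p hp).not_gt hM).le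
  have hdist : dist (x, p) (y, p) < r := by
    rw [dist_prod_same_right, dist_eq_norm]
    exact hxy
  exact hclose (x, p) ⟨mem_univ _, hp⟩ (y, p) ⟨mem_univ _, hp⟩ hdist

theorem exists_common_bound (hu₁ : ContinuousOn u₁ (strip n T)) (hu₂ : ContinuousOn u₂ (strip n T))
    (hu₁_per : ZPeriodicST u₁) (hu₂_per : ZPeriodicST u₂) :
    ∃ C, ∀ q ∈ strip n T, |u₁ q| ≤ C ∧ |u₂ q| ≤ C := by
  obtain ⟨C, hC⟩ := (isCompact_image_of_periodic isCompact_Icc (hu₁.prodMk hu₂) fun x k t => by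
    rw [hu₁_per x k t, hu₂_per x k t]).isBounded.exists_norm_le
  exact ⟨C, fun q hq => norm_prod_le_iff.1 (hC _ (mem_image_of_mem _ hq))⟩

theorem exists_common_modulus (hu₁ : ContinuousOn u₁ (strip n T))
    (hu₂ : ContinuousOn u₂ (strip n T)) (hψ : ContinuousOn ψ (Icc 0 T)) (hu₁_per : ZPeriodicST u₁)
    (hu₂_per : ZPeriodicST u₂) {ε : ℝ} (hε : 0 < ε) :
    ∃ r > 0, ∀ q ∈ strip n T, ∀ q' ∈ strip n T, ‖q.1 - q'.1‖ < r → |q.2 - q'.2| < r →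
      |u₁ q - u₁ q'| < ε ∧ |u₂ q - u₂ q'| < ε ∧ |ψ q.2 - ψ q'.2| < ε := by
  have hψ' : ContinuousOn (fun q : En n × ℝ => ψ q.2) (strip n T) :=
    hψ.comp continuousOn_snd fun q hq => hq.2
  have huc : UniformContinuousOn (fun q => (u₁ q, u₂ q, ψ q.2)) (strip n T) :=
    uniformContinuousOn_of_periodic isCompact_Icc (hu₁.prodMk (hu₂.prodMk hψ')) fun x k t => by
      rw [hu₁_per x k t, hu₂_per x k t]
  obtain ⟨r, hr, hclose⟩ := Metric.uniformContinuousOn_iff.1 huc ε hε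
  refine ⟨r, hr, fun q hq q' hq' hx ht => ?_⟩
  have hdist : dist q q' < r := by
    rw [Prod.dist_eq, max_lt_iff, dist_eq_norm, Real.dist_eq]
    exact ⟨hx, ht⟩
  simpa only [Prod.dist_eq, max_lt_iff, Real.dist_eq] using hclose q hq q' hq' hdist

theorem IsStrictBarrier.sub_le (hH : Continuous fun q : En n × En n => H q.1 q.2)
    (hH_per : ZPeriodicH H) (hH_coer : Coercive H) (hu₁ : ContinuousOn u₁ (strip n T))
    (hu₂ : ContinuousOn u₂ (strip n T)) (hu₁_per : ZPeriodicST u₁) (hu₂_per : ZPeriodicST u₂)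
    (hsub : EvolSubIneq H u₁ u₂) (hsup : EvolSuperIneq H u₂ u₁) (hδ : 0 < δ)
    (hψ : IsStrictBarrier (u₁ - u₂) T δ ψ) {q : En n × ℝ} (hq : q ∈ strip n T) :
    u₁ q - u₂ q ≤ ψ q.2 := by
  by_contra! hlt
  have hδ3 : 0 < δ / 3 := by positivity
  have hψ_cont : Continuous ψ := hψ.contDiff.continuous
  have hψ'_cont : Continuous (deriv ψ) := hψ.contDiff.continuous_deriv le_rfl
  obtain ⟨C, hC⟩ := exists_common_bound hu₁ hu₂ hu₁_per hu₂_per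
  obtain ⟨D, hD⟩ := isCompact_Icc.exists_bound_of_continuousOn
    (hψ_cont.prodMk hψ'_cont).continuousOn (s := Icc 0 T)
  simp only [norm_prod_le_iff, Real.norm_eq_abs, abs_le] at hC hD
  have hbound (z) (hz : z ∈ strip n T ×ˢ strip n T) :
      u₁ z.1 - u₂ z.2 - ψ z.1.2 < 2 * C + D + 1 := by
    linarith [(hC _ hz.1).1.2, (hC _ hz.2).2.1, (hD _ hz.1.2).1.1]
  obtain ⟨r, hr, hclose⟩ :=
    exists_common_modulus hu₁ hu₂ hψ_cont.continuousOn hu₁_per hu₂_per hδ3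
  set B : ℝ := (2 * C + D + 1) / r ^ 2
  obtain ⟨r', hr', hH_close⟩ :=
    hH_coer.exists_modulus hH hH_per (2 * B * r + (2 * C + D + 1)) hδ3
  obtain ⟨⟨⟨x, t⟩, ⟨y, s⟩⟩, ⟨hxt, hys⟩, hxy, hts, hnonneg, hmax⟩ :=
    exists_isMaxOn_doubled hu₁ hu₂ hψ_cont.continuousOn hu₁_per hu₂_per (lt_min hr hr') hr hbound hq
      (sub_nonneg.2 hlt.le)
  have hC_pos : 0 < 2 * C + D + 1 := by linarith [hbound (q, q) ⟨hq, hq⟩]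
  obtain ⟨hxy_r, hxy_r'⟩ := lt_min_iff.1 hxy
  obtain ⟨hu₁_close, hu₂_close, hψ_close⟩ := hclose _ hxt _ hys hxy_r hts
  obtain ⟨hsub_ineq, hgap⟩ := hψ.hamiltonian_gap_of_isMaxOn_doubled hsub hsup (by positivity)
    (by positivity) hxt.2 hys.2 hmax hnonneg hu₁_close hu₂_close hψ_close
  have hB_le : 2 * B * -r ≤ 2 * B * (t - s) :=
    mul_le_mul_of_nonneg_left (abs_lt.1 hts).1.le (by positivity)
  have hmomentum := hH_close x y _ hxy_r' (by
    linarith [(hC _ hxt).1.1, (hC _ hxt).2.2, (hD _ hxt.2).2.1])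
  linarith [(abs_lt.1 hmomentum).1]

end Comparison

section Decay

open Real

variable {n : ℕ} {H : En n → En n → ℝ} {u₁ u₂ : En n × ℝ → ℝ}

/-- The solution `M e^{-2t}` of `y' + 2 y = 0` perturbed by `η e^{K(t-T)}`, which equals `η` at time
`T` and is large at time `T + 1` when `K` is. -/
noncomputable def decayBarrier (M η K T t : ℝ) : ℝ := M * exp (-2 * t) + η * exp (K * (t - T))

theorem hasDerivAt_decayBarrier (M η K T t : ℝ) :
    HasDerivAt (decayBarrier M η K T)
      (-2 * decayBarrier M η K T t + η * (K + 2) * exp (K * (t - T))) t := by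
  have hdecay : HasDerivAt (fun τ => M * exp (-2 * τ)) (M * (exp (-2 * t) * (-2 * 1))) t :=
    (((hasDerivAt_id' t).const_mul (-2)).exp).const_mul M
  have hgrowth :
      HasDerivAt (fun τ => η * exp (K * (τ - T))) (η * (exp (K * (t - T)) * (K * 1))) t :=
    ((((hasDerivAt_id' t).sub_const T).const_mul K).exp).const_mul η
  refine (hdecay.fun_add hgrowth).congr_deriv ?_
  rw [decayBarrier]
  ring

theorem isStrictBarrier_decayBarrier {w : En n × ℝ → ℝ} {M η K T : ℝ} (hη : 0 < η) (hK : 0 ≤ K)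
    (hw_initial : ∀ x, w (x, 0) ≤ M) (hw_final : ∀ x, w (x, T + 1) + |M| + 1 ≤ η * K)
    (hT : 0 ≤ T) :
    IsStrictBarrier w (T + 1) (min 1 (η * exp (-(K * T)))) (decayBarrier M η K T) where
  contDiff := by
    unfold decayBarrier
    fun_prop
  initial_le x := by
    have : decayBarrier M η K T 0 = M + η * exp (-(K * T)) := by simp [decayBarrier]
    linarith [hw_initial x, min_le_right 1 (η * exp (-(K * T)))]
  final_le x := by
    have hdecay : -|M| ≤ M * exp (-2 * (T + 1)) := by
      refine (abs_le.1 ?_).1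
      rw [abs_mul, abs_exp]
      exact mul_le_of_le_one_right (abs_nonneg M) (exp_le_one_iff.2 (by linarith))
    have hgrowth : η * K ≤ η * exp (K * (T + 1 - T)) := by
      rw [add_sub_cancel_left, mul_one]
      gcongr
      linarith [add_one_le_exp K]
    rw [decayBarrier]
    linarith [hw_final x, min_le_left 1 (η * exp (-(K * T)))]
  le_deriv_add t ht := by
    rw [(hasDerivAt_decayBarrier M η K T t).deriv]
    calc min 1 (η * exp (-(K * T)))
      _ ≤ η * exp (-(K * T)) := min_le_right _ _
      _ ≤ η * (K + 2) * exp (K * (t - T)) := by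
          gcongr
          · exact le_mul_of_one_le_right hη.le (by linarith)
          · nlinarith [mul_nonneg hK ht.1]
      _ = _ := by ring

theorem sub_le_mul_exp_of_initial_le (hH : Continuous fun q : En n × En n => H q.1 q.2)
    (hH_per : ZPeriodicH H) (hH_coer : Coercive H)
    (hu₁ : ContinuousOn u₁ {q : En n × ℝ | 0 ≤ q.2})
    (hu₂ : ContinuousOn u₂ {q : En n × ℝ | 0 ≤ q.2}) (hu₁_per : ZPeriodicST u₁)
    (hu₂_per : ZPeriodicST u₂) (hsub : EvolSubIneq H u₁ u₂) (hsup : EvolSuperIneq H u₂ u₁)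
    {M : ℝ} (hinitial : ∀ x, u₁ (x, 0) - u₂ (x, 0) ≤ M) (x : En n) {T : ℝ} (hT : 0 ≤ T) :
    u₁ (x, T) - u₂ (x, T) ≤ M * exp (-2 * T) := by
  have strip_subset : strip n (T + 1) ⊆ {q : En n × ℝ | 0 ≤ q.2} := fun q hq => hq.2.1
  have hu₁' := hu₁.mono strip_subset
  have hu₂' := hu₂.mono strip_subset
  obtain ⟨C, hC⟩ := exists_common_bound hu₁' hu₂' hu₁_per hu₂_per
  have hfinal (y : En n) : |(u₁ - u₂) (y, T + 1)| ≤ C + C := by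
    obtain ⟨hu₁_le, hu₂_le⟩ := hC (y, T + 1) ⟨mem_univ _, by linarith, le_rfl⟩
    exact (abs_sub _ _).trans (add_le_add hu₁_le hu₂_le)
  refine le_of_forall_pos_le_add fun η hη => ?_
  set K : ℝ := (C + C + |M| + 1) / η
  have hηK : η * K = C + C + |M| + 1 := mul_div_cancel₀ _ hη.ne'
  have hK : 0 ≤ K := div_nonneg (by linarith [(abs_nonneg _).trans (hfinal x), abs_nonneg M]) hη.le
  have hbarrier := isStrictBarrier_decayBarrier (w := u₁ - u₂) hη hK hinitial
    (fun y => by linarith [(abs_le.1 (hfinal y)).2]) hT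
  have hcompare := hbarrier.sub_le hH hH_per hH_coer hu₁' hu₂' hu₁_per hu₂_per hsub hsup
    (by positivity) (q := (x, T)) ⟨mem_univ _, hT, by simp⟩
  simpa [decayBarrier] using hcompare

theorem unifTendsTo_of_abs_sub_le {u : En n × ℝ → ℝ} {v : En n → ℝ} {g : ℝ → ℝ}
    (hle : ∀ x t, 0 ≤ t → |u (x, t) - v x| ≤ g t) (hg : Tendsto g atTop (𝓝 0)) :
    UnifTendsTo u v := by
  intro ε hε
  obtain ⟨T, hT⟩ := eventually_atTop.1
    ((hg.eventually (Iic_mem_nhds hε)).and (eventually_ge_atTop 0))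
  exact ⟨T, fun t ht x => (hle x t (hT t ht).2).trans (hT t ht).1⟩

theorem tendsto_mul_exp_neg_two_mul (M : ℝ) :
    Tendsto (fun t => M * exp (-2 * t)) atTop (𝓝 0) := by
  have : Tendsto (fun t : ℝ => -2 * t) atTop atBot :=
    tendsto_id.const_mul_atTop_of_neg (by norm_num)
  simpa using (tendsto_exp_atBot.comp this).const_mul M

theorem SysSolution.bddAbove_range_abs_sub {H₁ H₂ : En n → En n → ℝ} {u₀₁ u₀₂ : En n → ℝ}
    (hsol : SysSolution H₁ H₂ u₀₁ u₀₂ u₁ u₂) (hu₁_per : ZPeriodicST u₁)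
    (hu₂_per : ZPeriodicST u₂) : BddAbove (range fun y => |u₀₁ y - u₀₂ y|) := by
  obtain ⟨hu₁, hu₂, -, -, hu₁_initial, hu₂_initial⟩ := hsol
  have strip_subset : strip n 0 ⊆ {q : En n × ℝ | 0 ≤ q.2} := fun q hq => hq.2.1
  obtain ⟨C, hC⟩ := exists_common_bound (hu₁.mono strip_subset) (hu₂.mono strip_subset)
    hu₁_per hu₂_per
  refine ⟨C + C, ?_⟩
  rintro _ ⟨y, rfl⟩
  obtain ⟨hu₁_le, hu₂_le⟩ := hC (y, 0) ⟨mem_univ _, left_mem_Icc.2 le_rfl⟩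
  rw [hu₁_initial] at hu₁_le
  rw [hu₂_initial] at hu₂_le
  exact (abs_sub _ _).trans (add_le_add hu₁_le hu₂_le)

end Decay

theorem stmt13_general {n : ℕ} {H : En n → En n → ℝ}
    (hH : Continuous fun q : En n × En n => H q.1 q.2) (hH_per : ZPeriodicH H)
    (hH_coer : Coercive H) {u₀₁ u₀₂ : En n → ℝ} {u₁ u₂ : En n × ℝ → ℝ}
    (hu₁_per : ZPeriodicST u₁) (hu₂_per : ZPeriodicST u₂)
    (hsol : SysSolution H H u₀₁ u₀₂ u₁ u₂) :
    (∀ (x : En n) (t : ℝ), 0 ≤ t →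
      |u₁ (x, t) - u₂ (x, t)| ≤ (⨆ y : En n, |u₀₁ y - u₀₂ y|) * Real.exp (-2 * t)) ∧
    UnifTendsTo (fun q => u₁ q - u₂ q) (fun _ => 0) := by
  have hbdd := hsol.bddAbove_range_abs_sub hu₁_per hu₂_per
  obtain ⟨hu₁, hu₂, ⟨hsub₁, hsub₂⟩, ⟨hsup₁, hsup₂⟩, hu₁_initial, hu₂_initial⟩ := hsol
  have hinitial (x : En n) : |u₁ (x, 0) - u₂ (x, 0)| ≤ ⨆ y, |u₀₁ y - u₀₂ y| := by
    rw [hu₁_initial, hu₂_initial]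
    exact le_ciSup hbdd x
  have hdecay (x : En n) (t : ℝ) (ht : 0 ≤ t) :
      |u₁ (x, t) - u₂ (x, t)| ≤ (⨆ y, |u₀₁ y - u₀₂ y|) * Real.exp (-2 * t) :=
    abs_sub_le_iff.2
      ⟨sub_le_mul_exp_of_initial_le hH hH_per hH_coer hu₁ hu₂ hu₁_per hu₂_per hsub₁ hsup₂
        (fun y => (abs_sub_le_iff.1 (hinitial y)).1) x ht,
      sub_le_mul_exp_of_initial_le hH hH_per hH_coer hu₂ hu₁ hu₂_per hu₁_per hsub₂ hsup₁
        (fun y => (abs_sub_le_iff.1 (hinitial y)).2) x ht⟩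
  exact ⟨hdecay, unifTendsTo_of_abs_sub_le (by simpa only [sub_zero] using hdecay)
    (tendsto_mul_exp_neg_two_mul _)⟩

/-- Proposition 5.1: exponential decay of `u₁ - u₂` when `H₁ = H₂`. -/
theorem stmt13 (n : ℕ) (hn : 1 ≤ n) (H : En n → En n → ℝ)
    (hHcont : Continuous fun q : En n × En n => H q.1 q.2)
    (hHper : ZPeriodicH H) (hHcoer : Coercive H)
    (u₀₁ u₀₂ : En n → ℝ) (hu₀₁ : IsLip u₀₁) (hu₀₂ : IsLip u₀₂)
    (hu₀₁per : ZPeriodic u₀₁) (hu₀₂per : ZPeriodic u₀₂)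
    (u₁ u₂ : En n × ℝ → ℝ) (hu₁per : ZPeriodicST u₁) (hu₂per : ZPeriodicST u₂)
    (hsol : SysSolution H H u₀₁ u₀₂ u₁ u₂) :
    (∀ (x : En n) (t : ℝ), 0 ≤ t →
      |u₁ (x, t) - u₂ (x, t)| ≤ (⨆ y : En n, |u₀₁ y - u₀₂ y|) * Real.exp (-2 * t)) ∧
    UnifTendsTo (fun q => u₁ q - u₂ q) (fun _ => 0) := by
  exact stmt13_general hHcont hHper hHcoer hu₁per hu₂per hsol
end
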